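/- For each degree n ≥ 3 and each ε > 0 there exists a constant C = C(n,ε) such that every number field K of degree n over ℚ satisfies |Cl_K[2]| ≤ C · D_K^{1/2 − 1/(2n) + ε}. -/

import Mathlib

open NumberField

/-- The order of the `ℓ`-torsion subgroup of the class group of a number field `K`. -/
noncomputable def clTor (K : Type*) [Field K] (ℓ : ℕ) : ℕ :=
  Nat.card {c : ClassGroup (𝓞 K) // c ^ ℓ = 1}

/-!
By Minkowski's theorem every 2-torsion class contains an integral ideal `J` with `J ^ 2 = (α)` and
all archimedean absolute values of `α` at most `9 D ^ (1 / n)`, so it suffices to count such pairs.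
The count splits according to the parity of `[K : ℚ(α)]`.

*Odd index.* The dual lattice of `𝓞 K` is the inverse different, which has no short vectors, so
there are `O(D ^ (1 / 2))` integers of the given size, forming `O(D ^ (1 / 2 - 1 / n))` classes
modulo translation by `ℤ`. On one class `t + ℤ` the condition that `(α)` is a square makes
`N(t - x) = ± y ^ 2`; as a polynomial in `x` the norm is an odd power of an irreducible polynomial,
hence not a square up to sign, and the Bombieri–Pila determinant method leaves
`O(D ^ (1 / (2 * n) + ε))` choices of `x`.

*Even index.* The valuation of `N(J)` at every prime `p ∤ D` is even, since primes of `ℚ(α)` above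
`p` do not ramify in `K`. So `N(J) = a * b ^ 2` with `a ∣ D` and `b = O(D ^ (1 / 4))`, and the
divisor bound leaves `O(D ^ (1 / 4 + ε))` ideals.
-/

/-! ### The determinant method -/

section DeterminantMethod

open Polynomial Matrix

variable {R ι : Type*} [CommRing R] [Fintype ι] [DecidableEq ι]

lemma det_vandermonde_dvd_det_eval [Nontrivial R] {m : ℕ} (x : Fin m → R) (P : Fin m → R[X]) :
    (vandermonde x).det ∣ (of fun k j => (P j).eval (x k)).det := by
  set W : R[X] := ∏ k, (X - C (x k)) with hW
  have hWmonic : W.Monic := monic_prod_of_monic _ _ fun k _ => monic_X_sub_C _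
  have hWdeg : W.natDegree = m := by
    rw [hW, natDegree_prod_of_monic _ _ fun k _ => monic_X_sub_C _]
    simp
  have hWeval (k : Fin m) : W.eval (x k) = 0 := by
    rw [hW, eval_prod]
    exact Finset.prod_eq_zero (Finset.mem_univ k) (by simp)
  have hfactor : (of fun k j => (P j).eval (x k)) =
      vandermonde x * of fun i j : Fin m => (P j %ₘ W).coeff i := by
    ext k j
    have hlt : (P j %ₘ W).natDegree < m := by
      refine (natDegree_modByMonic_lt (P j) hWmonic fun h => ?_).trans_eq hWdeg
      rw [h, natDegree_one] at hWdeg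
      exact (hWdeg ▸ k).elim0
    calc (P j).eval (x k) = (P j %ₘ W).eval (x k) := by
          conv_lhs => rw [← modByMonic_add_div (P j) W]
          simp [hWeval]
      _ = ∑ i : Fin m, (P j %ₘ W).coeff i * x k ^ (i : ℕ) := by
          rw [eval_eq_sum_range' hlt,
            ← Fin.sum_univ_eq_sum_range (fun i => (P j %ₘ W).coeff i * x k ^ i)]
      _ = _ := by simp only [mul_apply, vandermonde_apply, of_apply, mul_comm]
  rw [hfactor, det_mul]
  exact dvd_mul_right _ _

lemma pow_choose_two_dvd_det_vandermonde {m : ℕ} {x : Fin m → R} {p : R}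
    (h : ∀ i j, p ∣ x i - x j) : p ^ m.choose 2 ∣ (vandermonde x).det := by
  rw [det_vandermonde]
  calc p ^ m.choose 2 = ∏ i : Fin m, ∏ _j ∈ Finset.Ioi i, p := by
        simp only [Finset.prod_const, Fin.card_Ioi]
        rw [Finset.prod_pow_eq_pow_sum, Fin.sum_univ_eq_sum_range (fun i => m - 1 - i),
          Finset.sum_range_reflect (fun i => i) m, Finset.sum_range_id, Nat.choose_two_right]
    _ ∣ _ := Finset.prod_dvd_prod_of_dvd _ _ fun i _ =>
        Finset.prod_dvd_prod_of_dvd _ _ fun j _ => h j i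

lemma pow_choose_two_dvd_det_eval [Nontrivial R] {x : ι → R} {p : R} (h : ∀ i j, p ∣ x i - x j)
    (P : ι → R[X]) :
    p ^ (Fintype.card ι).choose 2 ∣ (of fun k j => (P j).eval (x k)).det := by
  let e := Fintype.equivFin ι
  rw [← det_reindex_self e]
  exact (pow_choose_two_dvd_det_vandermonde fun i j => h (e.symm i) (e.symm j)).trans
    (det_vandermonde_dvd_det_eval (x ∘ e.symm) (P ∘ e.symm))

lemma dvd_det_of_forall_dvd_sub {A B : Matrix ι ι R} {q : R} (h : ∀ i j, q ∣ A i j - B i j)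
    (hB : q ∣ B.det) : q ∣ A.det := by
  let π := Ideal.Quotient.mk (Ideal.span {q})
  have hAB : π.mapMatrix A = π.mapMatrix B := by
    ext i j
    exact Ideal.Quotient.eq.2 (Ideal.mem_span_singleton.2 (h i j))
  rw [← Ideal.mem_span_singleton, ← Ideal.Quotient.eq_zero_iff_mem] at hB ⊢
  rw [RingHom.map_det, hAB, ← RingHom.map_det, hB]

/- Newton iteration for `Y ^ 2 = f`, run on polynomials: the inverse of the derivative `2 * b` may
be kept fixed, at the price of linear convergence. -/
lemma exists_polynomial_approx_sqrt (f : R[X]) {a b p : R} (hcop : IsCoprime (2 * b) p)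
    (hab : p ∣ b ^ 2 - f.eval a) (N : ℕ) :
    ∃ h : R[X], ∀ x, p ∣ x - a → p ∣ h.eval x - b ∧ p ^ (N + 1) ∣ h.eval x ^ 2 - f.eval x := by
  obtain ⟨c, d, hcd⟩ := hcop
  induction N with
  | zero =>
    refine ⟨C b, fun x hx => ⟨by simp, ?_⟩⟩
    simpa using dvd_sub hab (hx.trans (sub_dvd_eval_sub x a f))
  | succ N ih =>
    obtain ⟨h, hh⟩ := ih
    refine ⟨h - C c * (h ^ 2 - f), fun x hx => ?_⟩
    obtain ⟨⟨u, hu⟩, v, hv⟩ := hh x hx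
    simp only [eval_sub, eval_mul, eval_C, eval_pow]
    set H := h.eval x
    set F := f.eval x
    constructor
    · refine ⟨u - c * p ^ N * v, ?_⟩
      linear_combination hu - c * hv
    · have hderiv : 1 - 2 * c * H = p * (d - 2 * c * u) := by
        linear_combination -2 * c * hu - hcd
      have herror : (H - c * (H ^ 2 - F)) ^ 2 - F =
          (H ^ 2 - F) * (1 - 2 * c * H) + c ^ 2 * (H ^ 2 - F) ^ 2 := by ring
      refine ⟨v * (d - 2 * c * u) + c ^ 2 * p ^ N * v ^ 2, ?_⟩
      rw [herror, hderiv, hv]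
      ring

lemma pow_choose_two_dvd_det_monomials [Nontrivial R] (f : R[X]) {a b p : R}
    (hcop : IsCoprime (2 * b) p) (hab : p ∣ b ^ 2 - f.eval a) {x y : ι → R}
    (hx : ∀ k, p ∣ x k - a) (hy : ∀ k, p ∣ y k - b) (hxy : ∀ k, y k ^ 2 = f.eval (x k))
    (r s : ι → ℕ) :
    p ^ (Fintype.card ι).choose 2 ∣ (of fun k j => x k ^ r j * y k ^ s j).det := by
  set N := (Fintype.card ι).choose 2
  obtain ⟨h, hh⟩ := exists_polynomial_approx_sqrt f hcop hab N
  have hyh (k : ι) : p ^ N ∣ y k - h.eval (x k) := by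
    obtain ⟨⟨u, hu⟩, hsq⟩ := hh _ (hx k)
    obtain ⟨v, hv⟩ := hy k
    have hcop' : IsCoprime (p ^ N) (y k + h.eval (x k)) := by
      have : y k + h.eval (x k) = 2 * b + p * (u + v) := by linear_combination hu + hv
      rw [this]
      exact ((IsCoprime.add_mul_left_left_iff).2 hcop).symm.pow_left
    refine hcop'.dvd_of_dvd_mul_left ?_
    rw [← sq_sub_sq, hxy, ← dvd_neg, neg_sub]
    exact (pow_dvd_pow p N.le_succ).trans hsq
  refine dvd_det_of_forall_dvd_sub (fun k j => ?_) (pow_choose_two_dvd_det_eval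
    (fun i j => by simpa using dvd_sub (hx i) (hx j)) fun j => X ^ r j * h ^ s j)
  simp only [of_apply, eval_mul, eval_pow, eval_X, ← mul_sub]
  exact ((hyh k).trans (sub_dvd_pow_sub_pow _ _ _)).mul_left _

lemma abs_det_le_factorial_mul_prod {A : Matrix ι ι ℝ} {b : ι → ℝ} (h : ∀ k j, |A k j| ≤ b j) :
    |A.det| ≤ (Fintype.card ι).factorial * ∏ j, b j := by
  rw [det_apply]
  calc |∑ σ : Equiv.Perm ι, Equiv.Perm.sign σ • ∏ i, A (σ i) i|
      ≤ ∑ σ : Equiv.Perm ι, |Equiv.Perm.sign σ • ∏ i, A (σ i) i| := Finset.abs_sum_le_sum_abs _ _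
    _ = ∑ σ : Equiv.Perm ι, ∏ i, |A (σ i) i| := by
        refine Finset.sum_congr rfl fun σ _ => ?_
        rcases Int.units_eq_one_or (Equiv.Perm.sign σ) with hσ | hσ <;> simp [hσ, Finset.abs_prod]
    _ ≤ ∑ _σ : Equiv.Perm ι, ∏ j, b j := Finset.sum_le_sum fun σ _ =>
        Finset.prod_le_prod (fun _ _ => abs_nonneg _) fun i _ => h _ _
    _ = _ := by simp [Fintype.card_perm]

lemma exists_linear_relation_of_forall_det_eq_zero {k τ : Type*} [Field k] (w : τ → ι → k)
    (h : ∀ e : ι → τ, (of fun i => w (e i)).det = 0) :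
    ∃ c : ι → k, c ≠ 0 ∧ ∀ t, ∑ j, c j * w t j = 0 := by
  have hspan : Submodule.span k (Set.range w) ≠ ⊤ := fun hspan => by
    obtain ⟨κ, a, -, hs, hli⟩ := exists_linearIndependent' k w
    rw [hspan] at hs
    let basis : Module.Basis κ k (ι → k) := Module.Basis.mk hli hs.ge
    let e : ι ≃ κ := (Pi.basisFun k ι).indexEquiv basis
    have hunit : IsUnit (of fun i => w (a (e i))) :=
      linearIndependent_rows_iff_isUnit.1 (hli.comp e e.injective)
    rw [isUnit_iff_isUnit_det, h fun i => a (e i)] at hunit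
    exact not_isUnit_zero hunit
  obtain ⟨φ, hφ, hle⟩ := Submodule.exists_le_ker_of_lt_top _ (lt_top_iff_ne_top.2 hspan)
  refine ⟨fun j => φ fun i => if j = i then 1 else 0, fun h0 => hφ (LinearMap.ext fun v => ?_),
    fun t => ?_⟩
  · rw [LinearMap.pi_apply_eq_sum_univ]
    exact Finset.sum_eq_zero fun j _ => by rw [congrFun h0 j, Pi.zero_apply, smul_zero]
  · have hker : φ (w t) = 0 := hle (Submodule.subset_span ⟨t, rfl⟩)
    rw [LinearMap.pi_apply_eq_sum_univ] at hker
    exact (Finset.sum_congr rfl fun j _ => mul_comm _ _).trans hker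

end DeterminantMethod

/-! ### Integral points on `y ^ 2 = f x` -/

section IntegralPoints

open Polynomial Matrix

lemma isSquare_of_sq_eq_mul_sq {R : Type*} [CommRing R] [IsDomain R] [IsIntegrallyClosed R]
    {a p q : R} (hq : q ≠ 0) (h : p ^ 2 = a * q ^ 2) : IsSquare a := by
  obtain ⟨r, rfl⟩ := (IsIntegrallyClosed.pow_dvd_pow_iff two_ne_zero).1 (Dvd.intro_left a h.symm)
  refine ⟨r, mul_right_cancel₀ (pow_ne_zero 2 hq) ?_⟩
  rw [← h]
  ring

lemma card_le_of_forall_eval_add_eval_mul_eq_zero {k : Type*} [Field k] {F P Q : k[X]}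
    (hF : ¬ IsSquare F) (hPQ : P ≠ 0 ∨ Q ≠ 0) {M : ℕ} (hP : P.natDegree ≤ M)
    (hQ : Q.natDegree ≤ M) {T : Finset k} {y : k → k} (hy : ∀ x ∈ T, y x ^ 2 = F.eval x)
    (hT : ∀ x ∈ T, P.eval x + Q.eval x * y x = 0) : T.card ≤ 2 * M + F.natDegree := by
  classical
  have hne : P ^ 2 - F * Q ^ 2 ≠ 0 := fun h => by
    rcases eq_or_ne Q 0 with rfl | hQ0
    · simp_all
    · exact hF (isSquare_of_sq_eq_mul_sq hQ0 (sub_eq_zero.1 h))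
  have hdeg : (P ^ 2 - F * Q ^ 2).natDegree ≤ 2 * M + F.natDegree := by
    have hP2 : (P ^ 2).natDegree ≤ 2 * M := natDegree_pow_le_of_le 2 hP
    have hQ2 : (F * Q ^ 2).natDegree ≤ F.natDegree + 2 * M :=
      natDegree_mul_le_of_le le_rfl (natDegree_pow_le_of_le 2 hQ)
    exact (natDegree_sub_le _ _).trans (by lia)
  refine le_trans (card_le_degree_of_subset_roots fun x hx => ?_) hdeg
  rw [mem_roots hne, IsRoot.def, eval_sub, eval_mul, eval_pow, eval_pow, ← hy x hx]
  linear_combination (P.eval x - Q.eval x * y x) * hT x hx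

lemma prod_pow_mul_pow (B Y : ℝ) (M : ℕ) :
    ∏ j : Fin M × Fin 2, B ^ (j.1 : ℕ) * Y ^ (j.2 : ℕ) = B ^ (M * (M - 1)) * Y ^ M := by
  have hM : ∑ i : Fin M, 2 * (i : ℕ) = M * (M - 1) := by
    rw [← Finset.mul_sum, Fin.sum_univ_eq_sum_range (fun i => i), mul_comm,
      Finset.sum_range_id_mul_two]
  rw [Fintype.prod_prod_type, ← hM, ← Finset.prod_pow_eq_pow_sum]
  simp only [Fin.prod_univ_two, Fin.val_zero, Fin.val_one, pow_zero, pow_one, mul_one]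
  rw [← Fin.prod_const, ← Finset.prod_mul_distrib]
  exact Finset.prod_congr rfl fun i _ => by ring

lemma det_monomials_eq_zero (f : ℤ[X]) {a b p : ℤ} {M : ℕ} {B Y : ℝ}
    (hcop : IsCoprime (2 * b) p) (hab : b ^ 2 = f.eval a)
    (hsize : (2 * M).factorial * (B ^ (M * (M - 1)) * Y ^ M) < (p : ℝ) ^ (2 * M).choose 2)
    {x y : Fin M × Fin 2 → ℤ} (hxB : ∀ k, |(x k : ℝ)| ≤ B) (hyY : ∀ k, |(y k : ℝ)| ≤ Y)
    (hxa : ∀ k, p ∣ x k - a) (hyb : ∀ k, p ∣ y k - b) (hxy : ∀ k, y k ^ 2 = f.eval (x k)) :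
    (of fun k j : Fin M × Fin 2 => x k ^ (j.1 : ℕ) * y k ^ (j.2 : ℕ)).det = 0 := by
  have hcard : Fintype.card (Fin M × Fin 2) = 2 * M := by simp [mul_comm]
  have hdvd := pow_choose_two_dvd_det_monomials f hcop (hab ▸ by simp) hxa hyb hxy
    (fun j => j.1) (fun j => j.2)
  rw [hcard] at hdvd
  refine Int.eq_zero_of_abs_lt_dvd hdvd ?_
  have hentry (k j : Fin M × Fin 2) :
      |(x k : ℝ) ^ (j.1 : ℕ) * (y k : ℝ) ^ (j.2 : ℕ)| ≤ B ^ (j.1 : ℕ) * Y ^ (j.2 : ℕ) := by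
    have hB : 0 ≤ B := (abs_nonneg _).trans (hxB k)
    rw [abs_mul, abs_pow, abs_pow]
    gcongr
    exacts [hxB k, hyY k]
  have hle := abs_det_le_factorial_mul_prod
    (A := of fun k j : Fin M × Fin 2 => (x k : ℝ) ^ (j.1 : ℕ) * (y k : ℝ) ^ (j.2 : ℕ)) hentry
  rw [hcard, prod_pow_mul_pow] at hle
  have hcast : (((of fun k j : Fin M × Fin 2 => x k ^ (j.1 : ℕ) * y k ^ (j.2 : ℕ)).det : ℤ) : ℝ) =
      (of fun k j : Fin M × Fin 2 => (x k : ℝ) ^ (j.1 : ℕ) * (y k : ℝ) ^ (j.2 : ℕ)).det := by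
    rw [← eq_intCast (Int.castRingHom ℝ), RingHom.map_det]
    congr 1
    ext k j
    simp
  rw [← hcast] at hle
  exact_mod_cast hle.trans_lt hsize

lemma eval_ofFn {R : Type*} [CommSemiring R] [DecidableEq R] {M : ℕ} (v : Fin M → R) (x : R) :
    (ofFn M v).eval x = ∑ i, v i * x ^ (i : ℕ) := by
  simp [ofFn_eq_sum_monomial, eval_finsetSum]

lemma card_le_of_lifts_congruent {f : ℤ[X]} (hf : ¬ IsSquare (f.map (Int.castRingHom ℚ)))
    {a b p : ℤ} {M : ℕ} {B Y : ℝ} (hcop : IsCoprime (2 * b) p) (hab : b ^ 2 = f.eval a)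
    (hsize : (2 * M).factorial * (B ^ (M * (M - 1)) * Y ^ M) < (p : ℝ) ^ (2 * M).choose 2)
    {T : Finset ℤ} {y : ℤ → ℤ} (hxB : ∀ x ∈ T, |(x : ℝ)| ≤ B) (hyY : ∀ x ∈ T, |(y x : ℝ)| ≤ Y)
    (hxa : ∀ x ∈ T, p ∣ x - a) (hyb : ∀ x ∈ T, p ∣ y x - b)
    (hxy : ∀ x ∈ T, y x ^ 2 = f.eval x) : T.card ≤ 2 * M + f.natDegree := by
  obtain ⟨c, hc, hrel⟩ := exists_linear_relation_of_forall_det_eq_zero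
    (fun (x : T) (j : Fin M × Fin 2) => ((x : ℤ) : ℚ) ^ (j.1 : ℕ) * (y x : ℚ) ^ (j.2 : ℕ))
    fun e => by
      have hdet := det_monomials_eq_zero f hcop hab hsize (fun k => hxB _ (e k).2)
        (fun k => hyY _ (e k).2) (fun k => hxa _ (e k).2) (fun k => hyb _ (e k).2)
        fun k => hxy _ (e k).2
      have := congrArg (Int.castRingHom ℚ) hdet
      rw [RingHom.map_det, map_zero] at this
      rw [← this]
      congr 1
      ext k j
      simp
  let P : ℚ[X] := ofFn M fun i => c (i, 0)
  let Q : ℚ[X] := ofFn M fun i => c (i, 1)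
  have hPQ : P ≠ 0 ∨ Q ≠ 0 := by
    by_contra! h
    have hP := (map_eq_zero_iff _ (injective_ofFn M)).1 h.1
    have hQ := (map_eq_zero_iff _ (injective_ofFn M)).1 h.2
    refine hc (funext fun ⟨i, j⟩ => ?_)
    fin_cases j
    exacts [congrFun hP i, congrFun hQ i]
  have hdeg (v : Fin M → ℚ) : (ofFn M v).natDegree ≤ M :=
    natDegree_le_of_degree_le (ofFn_degree_lt v).le
  have hroot (x : ℤ) (hx : x ∈ T) : P.eval (x : ℚ) + Q.eval (x : ℚ) * (y x : ℚ) = 0 := by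
    rw [← hrel ⟨x, hx⟩, Fintype.sum_prod_type, eval_ofFn, eval_ofFn, Finset.sum_mul,
      ← Finset.sum_add_distrib]
    exact Finset.sum_congr rfl fun i _ => by simp [Fin.sum_univ_two]; ring
  have hcard := card_le_of_forall_eval_add_eval_mul_eq_zero hf hPQ (hdeg _) (hdeg _)
    (T := T.map ⟨((↑) : ℤ → ℚ), Int.cast_injective⟩) (y := fun q => (y q.num : ℚ))
    (by
      simp only [Finset.forall_mem_map, Function.Embedding.coeFn_mk, Rat.num_intCast]
      intro x hx
      rw [eval_intCast_map, Int.cast_id, ← hxy x hx]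
      simp)
    (by simpa using hroot)
  rw [Finset.card_map] at hcard
  exact hcard.trans (Nat.add_le_add_left natDegree_map_le _)

lemma card_le_of_residue_class_of_not_dvd {f : ℤ[X]}
    (hf : ¬ IsSquare (f.map (Int.castRingHom ℚ))) {p : ℕ} (hp : p.Prime) (hp2 : 2 < p) {M : ℕ}
    {B Y : ℝ} (hY : 0 ≤ Y)
    (hsize : (2 * M).factorial * (B ^ (M * (M - 1)) * Y ^ M) < (p : ℝ) ^ (2 * M).choose 2)
    {T : Finset ℤ} (hsq : ∀ x ∈ T, IsSquare (f.eval x)) (hxB : ∀ x ∈ T, |(x : ℝ)| ≤ B)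
    (hfY : ∀ x ∈ T, ((f.eval x : ℤ) : ℝ) ≤ Y ^ 2) (hT : ∀ x ∈ T, ∀ x' ∈ T, (p : ℤ) ∣ x - x')
    (hfp : ∀ x ∈ T, ¬ (p : ℤ) ∣ f.eval x) : T.card ≤ 2 * M + f.natDegree := by
  rcases T.eq_empty_or_nonempty with rfl | ⟨a, ha⟩
  · simp
  have hpZ : Prime (p : ℤ) := Nat.prime_iff_prime_int.1 hp
  obtain ⟨b, hab⟩ := hsq a ha
  rw [← sq] at hab
  have hcop : IsCoprime (2 * b) (p : ℤ) := by
    refine (hpZ.coprime_iff_not_dvd.2 fun h => ?_).symm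
    rcases hpZ.dvd_or_dvd h with h | h
    · have := Int.le_of_dvd two_pos h
      lia
    · exact hfp a ha (hab ▸ h.pow two_ne_zero)
  have hlift (x : ℤ) : ∃ y : ℤ, x ∈ T → y ^ 2 = f.eval x ∧ (p : ℤ) ∣ y - b := by
    by_cases hx : x ∈ T
    swap
    · exact ⟨0, fun h => absurd h hx⟩
    obtain ⟨y, hy⟩ := hsq x hx
    rw [← sq] at hy
    have hdvd : (p : ℤ) ∣ (y + b) * (y - b) := by
      rw [← sq_sub_sq, ← hy, ← hab]
      exact (hT x hx a ha).trans (sub_dvd_eval_sub _ _ _)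
    rcases hpZ.dvd_or_dvd hdvd with h | h
    · exact ⟨-y, fun _ => ⟨by rw [hy, neg_sq], by rwa [← neg_add', dvd_neg]⟩⟩
    · exact ⟨y, fun _ => ⟨hy.symm, h⟩⟩
  choose y hy using hlift
  refine card_le_of_lifts_congruent hf hcop hab.symm (mod_cast hsize) hxB (fun x hx => ?_)
    (fun x hx => hT x hx a ha) (fun x hx => (hy x hx).2) fun x hx => (hy x hx).1
  refine abs_le_of_sq_le_sq ?_ hY
  exact_mod_cast (congrArg ((↑) : ℤ → ℝ) (hy x hx).1).trans_le (hfY x hx)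

lemma card_le_of_forall_modEq {p : ℕ} (hp : 0 < p) {B : ℝ} {v : ℤ} {T : Finset ℤ}
    (hB : 0 ≤ B) (hxB : ∀ x ∈ T, |(x : ℝ)| ≤ B) (hT : ∀ x ∈ T, x ≡ v [ZMOD p]) :
    (T.card : ℝ) ≤ 2 * B / p + 2 := by
  have hsub : T ⊆ {x ∈ Finset.Ioc (⌈-B⌉ - 1) ⌊B⌋ | x ≡ v [ZMOD p]} := fun x hx => by
    have hx' := abs_le.1 (hxB x hx)
    simp only [Finset.mem_filter, Finset.mem_Ioc, Int.le_floor, Int.sub_one_lt_iff, Int.ceil_le]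
    exact ⟨hx', hT x hx⟩
  have hp1 : (1 : ℝ) ≤ p := by exact_mod_cast hp
  set u : ℚ := (⌊B⌋ - v) / (p : ℤ)
  set l : ℚ := ((⌈-B⌉ - 1 : ℤ) - v) / (p : ℤ)
  have hcard : (T.card : ℤ) ≤ max (⌊u⌋ - ⌊l⌋) 0 := by
    rw [← Int.Ioc_filter_modEq_card _ _ (by exact_mod_cast hp)]
    exact_mod_cast Finset.card_le_card hsub
  have hcard' : (T.card : ℝ) ≤ max ((⌊u⌋ : ℝ) - ⌊l⌋) 0 := by exact_mod_cast hcard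
  have hu : (⌊u⌋ : ℝ) ≤ u := by exact_mod_cast Int.floor_le u
  have hl : (l : ℝ) < ⌊l⌋ + 1 := by exact_mod_cast Int.lt_floor_add_one l
  have hul : ((u : ℚ) : ℝ) - l ≤ 2 * B / p + 1 := by
    have hB1 := Int.floor_le B
    have hB2 := Int.le_ceil (-B)
    simp only [u, l]
    push_cast
    rw [← sub_div, div_add_one (by positivity)]
    gcongr
    linarith
  refine hcard'.trans (max_le (by linarith) (by positivity))

lemma factorial_mul_lt_pow_choose_two {n M : ℕ} {δ c B q : ℝ} (hM : 1 ≤ M)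
    (hnM : (n : ℝ) ≤ 2 * δ * (2 * M - 1)) (hB : 1 ≤ B)
    (hq : ((2 * M).factorial * √c ^ M + 1) * B ^ (1 / 2 + δ) ≤ q) :
    (2 * M).factorial * (B ^ (M * (M - 1)) * (√c * B ^ ((n : ℝ) / 2)) ^ M) <
      q ^ (2 * M).choose 2 := by
  have hB0 : 0 < B := by linarith
  have hM' : (1 : ℝ) ≤ M := by exact_mod_cast hM
  set G : ℝ := (2 * M).factorial * √c ^ M
  have hG : 0 ≤ G := by positivity
  set E : ℕ := (2 * M).choose 2
  have hE : (E : ℝ) = M * (2 * M - 1) := by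
    rw [Nat.cast_choose_two]
    push_cast
    ring
  have hE1 : E ≠ 0 := (Nat.choose_pos (by lia)).ne'
  have hexp : (M : ℝ) * (M - 1) + n / 2 * M ≤ (1 / 2 + δ) * E := by
    have := mul_le_mul_of_nonneg_right hnM (by positivity : (0 : ℝ) ≤ M / 2)
    rw [hE]
    linarith
  calc (2 * M).factorial * (B ^ (M * (M - 1)) * (√c * B ^ ((n : ℝ) / 2)) ^ M)
      = G * B ^ ((M : ℝ) * (M - 1) + n / 2 * M) := by
        rw [Real.rpow_add hB0, Real.rpow_mul_natCast hB0.le, ← Nat.cast_pred hM, ← Nat.cast_mul,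
          Real.rpow_natCast, mul_pow]
        ring
    _ ≤ G * B ^ ((1 / 2 + δ) * E) := by gcongr
    _ < (G + 1) * B ^ ((1 / 2 + δ) * E) := by
        gcongr
        exact lt_add_one G
    _ ≤ (G + 1) ^ E * B ^ ((1 / 2 + δ) * E) := by
        gcongr
        exact le_self_pow₀ (by linarith) hE1
    _ = ((G + 1) * B ^ (1 / 2 + δ)) ^ E := by rw [mul_pow, Real.rpow_mul_natCast hB0.le]
    _ ≤ q ^ E := by gcongr

lemma card_filter_eval_map_eq_zero_le {f : ℤ[X]} (hf : f.IsPrimitive) (p : ℕ) [Fact p.Prime] :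
    (Finset.univ.filter fun r : ZMod p =>
      (f.map (Int.castRingHom (ZMod p))).eval r = 0).card ≤ f.natDegree := by
  have hne : f.map (Int.castRingHom (ZMod p)) ≠ 0 := fun h => by
    have hdvd : C (p : ℤ) ∣ f := (C_dvd_iff_dvd_coeff _ _).2 fun i => by
      simpa [coeff_map, ZMod.intCast_zmod_eq_zero_iff_dvd] using congrArg (coeff · i) h
    exact (Nat.prime_iff_prime_int.1 Fact.out).not_isUnit (hf _ hdvd)
  refine le_trans (card_le_degree_of_subset_roots fun r hr => ?_)
    (natDegree_map_le (f := Int.castRingHom (ZMod p)))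
  simpa [mem_roots hne] using hr

lemma card_residue_class_le {f : ℤ[X]} (hf : ¬ IsSquare (f.map (Int.castRingHom ℚ)))
    {p : ℕ} [Fact p.Prime] (hp2 : 2 < p) {M : ℕ} {B Y : ℝ} (hB : 0 ≤ B) (hY : 0 ≤ Y)
    (hsize : (2 * M).factorial * (B ^ (M * (M - 1)) * Y ^ M) < (p : ℝ) ^ (2 * M).choose 2)
    {T : Finset ℤ} (hsq : ∀ x ∈ T, IsSquare (f.eval x)) (hxB : ∀ x ∈ T, |(x : ℝ)| ≤ B)
    (hfY : ∀ x ∈ T, ((f.eval x : ℤ) : ℝ) ≤ Y ^ 2) (r : ZMod p) :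
    ((T.filter fun x : ℤ => (x : ZMod p) = r).card : ℝ) ≤ (2 * M + f.natDegree) +
      if (f.map (Int.castRingHom (ZMod p))).eval r = 0 then 2 * B / p + 2 else 0 := by
  set S := T.filter fun x : ℤ => (x : ZMod p) = r
  have hST {x : ℤ} (hx : x ∈ S) : x ∈ T := (Finset.mem_filter.1 hx).1
  have hSr {x : ℤ} (hx : x ∈ S) : (x : ZMod p) = r := (Finset.mem_filter.1 hx).2
  split_ifs with hr
  · refine (card_le_of_forall_modEq (v := r.val) (Fact.out : p.Prime).pos hB
      (fun x hx => hxB x (hST hx)) fun x hx => ?_).trans (le_add_of_nonneg_left (by positivity))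
    rw [← ZMod.intCast_eq_intCast_iff, hSr hx]
    simp
  · rw [add_zero]
    refine mod_cast card_le_of_residue_class_of_not_dvd hf Fact.out hp2 hY hsize
      (fun x hx => hsq x (hST hx)) (fun x hx => hxB x (hST hx)) (fun x hx => hfY x (hST hx))
      (fun x hx x' hx' => ?_) fun x hx hdvd => hr ?_
    · rw [← ZMod.intCast_eq_intCast_iff_dvd_sub, hSr hx, hSr hx']
    · rw [← hSr hx, eval_intCast_map, Int.cast_id]
      exact (ZMod.intCast_zmod_eq_zero_iff_dvd _ _).2 hdvd

lemma card_isSquare_eval_le_of_prime {f : ℤ[X]} (hprim : f.IsPrimitive)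
    (hf : ¬ IsSquare (f.map (Int.castRingHom ℚ))) {p : ℕ} (hp : p.Prime) (hp2 : 2 < p) {M : ℕ}
    {B Y : ℝ} (hB : 0 ≤ B) (hY : 0 ≤ Y)
    (hsize : (2 * M).factorial * (B ^ (M * (M - 1)) * Y ^ M) < (p : ℝ) ^ (2 * M).choose 2)
    {T : Finset ℤ} (hsq : ∀ x ∈ T, IsSquare (f.eval x)) (hxB : ∀ x ∈ T, |(x : ℝ)| ≤ B)
    (hfY : ∀ x ∈ T, ((f.eval x : ℤ) : ℝ) ≤ Y ^ 2) :
    (T.card : ℝ) ≤ p * (2 * M + f.natDegree) + f.natDegree * (2 * B / p + 2) := by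
  have : Fact p.Prime := ⟨hp⟩
  calc (T.card : ℝ) = ∑ r : ZMod p, ((T.filter fun x : ℤ => (x : ZMod p) = r).card : ℝ) := by
        exact_mod_cast Finset.card_eq_sum_card_fiberwise (f := fun x : ℤ => (x : ZMod p))
          fun x _ => Finset.mem_univ _
    _ ≤ ∑ r : ZMod p, ((2 * M + f.natDegree : ℝ) +
          if (f.map (Int.castRingHom (ZMod p))).eval r = 0 then 2 * B / p + 2 else 0) :=
        Finset.sum_le_sum fun r _ => card_residue_class_le hf hp2 hB hY hsize hsq hxB hfY r
    _ = p * (2 * M + f.natDegree) + (Finset.univ.filter fun r : ZMod p =>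
          (f.map (Int.castRingHom (ZMod p))).eval r = 0).card * (2 * B / p + 2) := by
        rw [Finset.sum_add_distrib, ← Finset.sum_filter, Finset.sum_const, Finset.sum_const,
          Finset.card_univ, ZMod.card, nsmul_eq_mul, nsmul_eq_mul]
    _ ≤ _ := by
        gcongr
        exact card_filter_eval_map_eq_zero_le hprim p

lemma exists_prime_mem_Ioc_four_mul {q : ℝ} (hq : 1 ≤ q) :
    ∃ p : ℕ, p.Prime ∧ q < p ∧ (p : ℝ) ≤ 4 * q := by
  have hpos : 0 < ⌈q⌉₊ := Nat.ceil_pos.2 (by linarith)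
  obtain ⟨p, hp, hlt, hle⟩ := Nat.exists_prime_lt_and_le_two_mul ⌈q⌉₊ hpos.ne'
  refine ⟨p, hp, (Nat.le_ceil q).trans_lt (mod_cast hlt), ?_⟩
  have hceil : (⌈q⌉₊ : ℝ) < q + 1 := Nat.ceil_lt_add_one (by linarith)
  have hle' : (p : ℝ) ≤ 2 * ⌈q⌉₊ := by exact_mod_cast hle
  linarith

lemma exists_le_two_mul_mul_two_mul_sub_one (y : ℝ) {δ : ℝ} (hδ : 0 < δ) :
    ∃ M : ℕ, 1 ≤ M ∧ y ≤ 2 * δ * (2 * M - 1) := by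
  obtain ⟨M, hM⟩ := exists_nat_ge (y / (2 * δ))
  rw [div_le_iff₀' (by positivity)] at hM
  refine ⟨M + 1, by lia, hM.trans ?_⟩
  push_cast
  gcongr
  linarith [(Nat.cast_nonneg M : (0 : ℝ) ≤ M)]

theorem exists_card_isSquare_eval_le (n : ℕ) (c : ℝ) {δ : ℝ} (hδ : 0 < δ) :
    ∃ A : ℝ, 0 < A ∧ ∀ B : ℝ, 1 ≤ B → ∀ f : ℤ[X], f.IsPrimitive → f.natDegree = n →
      ¬ IsSquare (f.map (Int.castRingHom ℚ)) → ∀ T : Finset ℤ, (∀ x ∈ T, |(x : ℝ)| ≤ B) →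
      (∀ x ∈ T, ((f.eval x : ℤ) : ℝ) ≤ c * B ^ n) → (∀ x ∈ T, IsSquare (f.eval x)) →
      (T.card : ℝ) ≤ A * B ^ (1 / 2 + δ) := by
  obtain ⟨M, hM, hnM⟩ := exists_le_two_mul_mul_two_mul_sub_one n hδ
  set A : ℝ := (2 * M).factorial * √c ^ M + 2
  have hA : 2 ≤ A := le_add_of_nonneg_left (by positivity)
  refine ⟨4 * A * (2 * M + n) + 4 * n + 1, by positivity, ?_⟩
  intro B hB f hprim hdeg hf T hxB hfB hsq
  have hB0 : 0 < B := by linarith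
  set Z := B ^ (1 / 2 + δ)
  have hZ : 1 ≤ Z := Real.one_le_rpow hB (by linarith)
  obtain ⟨p, hp, hAZ, hpAZ⟩ := exists_prime_mem_Ioc_four_mul (q := A * Z) (by nlinarith)
  have hp2 : 2 < p := by
    have : (2 : ℝ) < p := by nlinarith
    exact_mod_cast this
  have hBp : B / p ≤ Z := by
    rw [div_le_iff₀ (by positivity)]
    calc B = B ^ (1 : ℝ) := (Real.rpow_one B).symm
      _ ≤ B ^ ((1 / 2 + δ) + (1 / 2 + δ)) := Real.rpow_le_rpow_of_exponent_le hB (by linarith)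
      _ = Z * Z := Real.rpow_add hB0 _ _
      _ ≤ Z * p := by gcongr; nlinarith
  have hfY (x : ℤ) (hx : x ∈ T) : ((f.eval x : ℤ) : ℝ) ≤ (√c * B ^ ((n : ℝ) / 2)) ^ 2 := by
    refine (hfB x hx).trans ?_
    rw [mul_pow, ← Real.rpow_mul_natCast hB0.le, ← Real.rpow_natCast, Nat.cast_two,
      div_mul_cancel₀ _ two_ne_zero]
    gcongr
    exact (le_max_left c 0).trans_eq Real.sq_sqrt'.symm
  have hsize := factorial_mul_lt_pow_choose_two hM hnM hB
    (q := p) (c := c) (hAZ.le.trans' (by gcongr; simp [A]))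
  calc (T.card : ℝ) ≤ p * (2 * M + n) + n * (2 * (B / p) + 2) := by
        rw [← hdeg, ← mul_div_assoc]
        exact card_isSquare_eval_le_of_prime hprim hf hp hp2 hB0.le (by positivity) hsize hsq hxB
          hfY
    _ ≤ 4 * (A * Z) * (2 * M + n) + n * (2 * Z + 2 * Z) := by
        gcongr
        linarith
    _ ≤ (4 * A * (2 * M + n) + 4 * n + 1) * Z := by linarith

end IntegralPoints

/-! ### Exponential sums over a lattice and its dual -/

section DualLattice

open MeasureTheory
open scoped Pointwise ENNReal

lemma setLIntegral_le_of_pairwise_disjoint_vadd {G α : Type*} [AddGroup G] [Countable G]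
    [AddAction G α] [MeasurableSpace α] [MeasurableConstVAdd G α] {μ : Measure α}
    [VAddInvariantMeasure G α μ] {F U : Set α} (hF : IsAddFundamentalDomain G F μ)
    (hU : MeasurableSet U) (hUdisj : Pairwise fun g g' : G => Disjoint (g +ᵥ U) (g' +ᵥ U))
    {f : α → ℝ≥0∞} (hf : ∀ (g : G) x, f (g +ᵥ x) = f x) :
    ∫⁻ x in U, f x ∂μ ≤ ∫⁻ x in F, f x ∂μ := by
  calc ∫⁻ x in U, f x ∂μ = ∑' g : G, ∫⁻ x in g +ᵥ U, f x ∂μ.restrict F := by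
        simp only [hF.setLIntegral_eq_tsum' f U, hf, Measure.restrict_restrict (hU.const_vadd _)]
    _ = ∫⁻ x in ⋃ g : G, g +ᵥ U, f x ∂μ.restrict F :=
        (lintegral_iUnion (fun g => hU.const_vadd g) hUdisj f).symm
    _ ≤ _ := setLIntegral_le_lintegral _ _

variable {V : Type*} [NormedAddCommGroup V] [NormedSpace ℝ V]

lemma cos_two_pi_mul_apply_vadd {Γ : AddSubgroup V} {ℓ : V →L[ℝ] ℝ}
    (hℓ : ∀ γ ∈ Γ, ∃ m : ℤ, ℓ γ = m) (γ : Γ) (t : V) :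
    Real.cos (2 * Real.pi * ℓ (γ +ᵥ t)) = Real.cos (2 * Real.pi * ℓ t) := by
  obtain ⟨m, hm⟩ := hℓ γ γ.2
  rw [AddSubgroup.vadd_def, vadd_eq_add, map_add, hm, mul_add, add_comm, mul_comm _ (m : ℝ)]
  exact Real.cos_add_int_mul_two_pi _ _

lemma exists_int_eq_sub_apply {Γ : AddSubgroup V} {S : Finset (V →L[ℝ] ℝ)}
    (hΓint : ∀ ℓ ∈ S, ∀ γ ∈ Γ, ∃ m : ℤ, ℓ γ = m) {ℓ ℓ' : V →L[ℝ] ℝ} (hℓ : ℓ ∈ S) (hℓ' : ℓ' ∈ S) :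
    ∀ γ ∈ Γ, ∃ m : ℤ, (ℓ - ℓ') γ = m := by
  intro γ hγ
  obtain ⟨a, ha⟩ := hΓint ℓ hℓ γ hγ
  obtain ⟨b, hb⟩ := hΓint ℓ' hℓ' γ hγ
  exact ⟨a - b, by rw [sub_apply, ha, hb, Int.cast_sub]⟩

/-- The square `|∑ e(ℓ t)|²` of the exponential sum with frequencies `ℓ ∈ S`, where
`e(x) = exp(2πix)`, in expanded form. -/
noncomputable def expSumSq (S : Finset (V →L[ℝ] ℝ)) (t : V) : ℝ :=
  ∑ ℓ ∈ S, ∑ ℓ' ∈ S, Real.cos (2 * Real.pi * (ℓ - ℓ') t)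

lemma expSumSq_eq_sq_add_sq (S : Finset (V →L[ℝ] ℝ)) (t : V) :
    expSumSq S t = (∑ ℓ ∈ S, Real.cos (2 * Real.pi * ℓ t)) ^ 2 +
      (∑ ℓ ∈ S, Real.sin (2 * Real.pi * ℓ t)) ^ 2 := by
  simp only [expSumSq, sq, Finset.sum_mul_sum, ← Finset.sum_add_distrib]
  refine Finset.sum_congr rfl fun ℓ _ => Finset.sum_congr rfl fun ℓ' _ => ?_
  rw [sub_apply, mul_sub, Real.cos_sub]

lemma expSumSq_nonneg (S : Finset (V →L[ℝ] ℝ)) (t : V) : 0 ≤ expSumSq S t := by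
  rw [expSumSq_eq_sq_add_sq]
  positivity

lemma card_sq_div_two_le_expSumSq {S : Finset (V →L[ℝ] ℝ)} {t : V}
    (ht : ∀ ℓ ∈ S, |ℓ t| ≤ 1 / 8) : (S.card : ℝ) ^ 2 / 2 ≤ expSumSq S t := by
  have hcos (ℓ : V →L[ℝ] ℝ) (hℓ : ℓ ∈ S) : √2 / 2 ≤ Real.cos (2 * Real.pi * ℓ t) := by
    rw [← Real.cos_pi_div_four, ← Real.cos_abs (2 * Real.pi * ℓ t)]
    refine Real.cos_le_cos_of_nonneg_of_le_pi (abs_nonneg _) (by linarith [Real.pi_pos]) ?_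
    rw [abs_mul, abs_of_pos Real.two_pi_pos]
    nlinarith [ht ℓ hℓ, Real.pi_pos]
  calc (S.card : ℝ) ^ 2 / 2 = (S.card • (√2 / 2)) ^ 2 := by
        rw [nsmul_eq_mul, mul_pow, div_pow, Real.sq_sqrt zero_le_two]
        ring
    _ ≤ (∑ ℓ ∈ S, Real.cos (2 * Real.pi * ℓ t)) ^ 2 := by
        gcongr
        exact Finset.card_nsmul_le_sum _ _ _ hcos
    _ ≤ expSumSq S t := by
        rw [expSumSq_eq_sq_add_sq]
        exact le_add_of_nonneg_right (sq_nonneg _)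

variable [MeasurableSpace V] [BorelSpace V] {μ : Measure V} {F : Set V}

lemma integrableOn_cos_apply (hFfin : μ F ≠ ⊤) (ℓ : V →L[ℝ] ℝ) :
    IntegrableOn (fun t => Real.cos (2 * Real.pi * ℓ t)) F μ :=
  Measure.integrableOn_of_bounded hFfin (by fun_prop)
    (Filter.Eventually.of_forall fun _ => Real.abs_cos_le_one _)

lemma integrableOn_expSumSq (hFfin : μ F ≠ ⊤) (S : Finset (V →L[ℝ] ℝ)) :
    IntegrableOn (expSumSq S) F μ :=
  integrable_finsetSum _ fun ℓ _ => integrable_finsetSum _ fun ℓ' _ =>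
    integrableOn_cos_apply hFfin (ℓ - ℓ')

variable [μ.IsAddLeftInvariant] {Γ : AddSubgroup V} [Countable Γ] {S : Finset (V →L[ℝ] ℝ)}

-- Translating the fundamental domain by some `s` with `ℓ s = 1 / 2` changes the sign of the cosine.
lemma setIntegral_cos_eq_zero (hF : IsAddFundamentalDomain Γ F μ) {ℓ : V →L[ℝ] ℝ} (hℓ : ℓ ≠ 0)
    (hΓint : ∀ γ ∈ Γ, ∃ m : ℤ, ℓ γ = m) : ∫ t in F, Real.cos (2 * Real.pi * ℓ t) ∂μ = 0 := by
  obtain ⟨v, hv⟩ := DFunLike.ne_iff.1 hℓ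
  rw [zero_apply] at hv
  set s : V := (1 / (2 * ℓ v)) • v with hs
  have hℓs : ℓ s = 1 / 2 := by
    rw [hs, map_smul, smul_eq_mul]
    field_simp
  have hneg : ∫ t in F, Real.cos (2 * Real.pi * ℓ t) ∂μ =
      -∫ t in F, Real.cos (2 * Real.pi * ℓ t) ∂μ :=
    calc ∫ t in F, Real.cos (2 * Real.pi * ℓ t) ∂μ
        = ∫ t in s +ᵥ F, Real.cos (2 * Real.pi * ℓ t) ∂μ :=
          hF.setIntegral_eq (hF.vadd_of_comm s) (cos_two_pi_mul_apply_vadd hΓint)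
      _ = ∫ t in F, Real.cos (2 * Real.pi * ℓ (s + t)) ∂μ :=
          (measurePreserving_add_left μ s).setIntegral_image_emb
            (measurableEmbedding_addLeft s) (fun t => Real.cos (2 * Real.pi * ℓ t)) F
      _ = ∫ t in F, -Real.cos (2 * Real.pi * ℓ t) ∂μ := by
          congr 1 with t
          rw [map_add, hℓs, mul_add, mul_one_div, mul_div_cancel_left₀ _ two_ne_zero, add_comm,
            Real.cos_add_pi]
      _ = _ := integral_neg _
  linarith

lemma setIntegral_expSumSq (hF : IsAddFundamentalDomain Γ F μ) (hFfin : μ F ≠ ⊤)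
    (hΓint : ∀ ℓ ∈ S, ∀ γ ∈ Γ, ∃ m : ℤ, ℓ γ = m) :
    ∫ t in F, expSumSq S t ∂μ = S.card * μ.real F := by
  have hdiag (ℓ) (hℓ : ℓ ∈ S) :
      ∫ t in F, ∑ ℓ' ∈ S, Real.cos (2 * Real.pi * (ℓ - ℓ') t) ∂μ = μ.real F := by
    rw [integral_finsetSum _ fun ℓ' _ => integrableOn_cos_apply hFfin (ℓ - ℓ'),
      Finset.sum_eq_single_of_mem ℓ hℓ fun ℓ' hℓ' hne => setIntegral_cos_eq_zero hF
        (sub_ne_zero.2 hne.symm) (exists_int_eq_sub_apply hΓint hℓ hℓ')]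
    simp
  simp only [expSumSq]
  rw [integral_finsetSum _ fun ℓ _ => integrable_finsetSum _ fun ℓ' _ =>
    integrableOn_cos_apply hFfin (ℓ - ℓ'), Finset.sum_congr rfl hdiag, Finset.sum_const,
    nsmul_eq_mul]

theorem card_mul_measure_le_of_dual (hF : IsAddFundamentalDomain Γ F μ) (hFfin : μ F ≠ ⊤)
    (hΓint : ∀ ℓ ∈ S, ∀ γ ∈ Γ, ∃ m : ℤ, ℓ γ = m) {U : Set V} (hU : MeasurableSet U)
    (hUsmall : ∀ ℓ ∈ S, ∀ u ∈ U, |ℓ u| ≤ 1 / 8)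
    (hUdisj : Pairwise fun γ γ' : Γ => Disjoint (γ +ᵥ U) (γ' +ᵥ U)) :
    S.card * μ.real U ≤ 2 * μ.real F := by
  rcases S.eq_empty_or_nonempty with rfl | hS
  · simp
  have hinv (γ : Γ) (t : V) : expSumSq S (γ +ᵥ t) = expSumSq S t :=
    Finset.sum_congr rfl fun ℓ hℓ => Finset.sum_congr rfl fun ℓ' hℓ' =>
      cos_two_pi_mul_apply_vadd (exists_int_eq_sub_apply hΓint hℓ hℓ') γ t
  have hUfin : μ U ≠ ⊤ := by
    refine ne_top_of_le_ne_top hFfin ?_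
    simpa using setLIntegral_le_of_pairwise_disjoint_vadd hF hU hUdisj (f := 1) fun _ _ => rfl
  have hlintegral : ENNReal.ofReal ((S.card : ℝ) ^ 2 / 2) * μ U ≤
      ENNReal.ofReal (S.card * μ.real F) :=
    calc ENNReal.ofReal ((S.card : ℝ) ^ 2 / 2) * μ U
        = ∫⁻ _ in U, ENNReal.ofReal ((S.card : ℝ) ^ 2 / 2) ∂μ := (setLIntegral_const _ _).symm
      _ ≤ ∫⁻ t in U, ENNReal.ofReal (expSumSq S t) ∂μ := setLIntegral_mono' hU fun t ht =>
          ENNReal.ofReal_le_ofReal (card_sq_div_two_le_expSumSq fun ℓ hℓ => hUsmall ℓ hℓ t ht)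
      _ ≤ ∫⁻ t in F, ENNReal.ofReal (expSumSq S t) ∂μ :=
          setLIntegral_le_of_pairwise_disjoint_vadd hF hU hUdisj fun γ t => by rw [hinv]
      _ = ENNReal.ofReal (S.card * μ.real F) := by
          rw [← setIntegral_expSumSq hF hFfin hΓint,
            ofReal_integral_eq_lintegral_ofReal (integrableOn_expSumSq hFfin S)
              (Filter.Eventually.of_forall (expSumSq_nonneg S))]
  rw [← ofReal_measureReal hUfin, ← ENNReal.ofReal_mul (by positivity),
    ENNReal.ofReal_le_ofReal_iff (by positivity)] at hlintegral
  have hcard : (0 : ℝ) < S.card := by exact_mod_cast hS.card_pos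
  refine le_of_mul_le_mul_left ?_ hcard
  linarith

end DualLattice

/-! ### Algebraic integers of bounded size -/

section SmallIntegers

open MeasureTheory
open scoped Pointwise nonZeroDivisors

variable {K : Type*} [Field K] [NumberField K]

variable (K) in
lemma one_le_abs_discr : 1 ≤ |(discr K : ℝ)| := by
  exact_mod_cast Int.one_le_abs (discr_ne_zero K)

variable (K) in
lemma one_le_rootDiscr : 1 ≤ rootDiscr K := by
  rw [rootDiscr_def, Int.cast_abs]
  exact Real.one_le_rpow (one_le_abs_discr K) (by positivity)

variable (K) in
lemma rootDiscr_pow_finrank : rootDiscr K ^ Module.finrank ℚ K = |(discr K : ℝ)| := by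
  rw [rootDiscr_def, Int.cast_abs, Real.rpow_inv_natCast_pow (abs_nonneg _) Module.finrank_pos.ne']

lemma abs_norm_le_pow_finrank {x : K} {R : ℝ} (hx : ∀ w : InfinitePlace K, w x ≤ R) :
    ((|Algebra.norm ℚ x| : ℚ) : ℝ) ≤ R ^ Module.finrank ℚ K := by
  rw [← InfinitePlace.prod_eq_abs_norm, ← InfinitePlace.sum_mult_eq, ← Finset.prod_pow_eq_pow_sum]
  exact Finset.prod_le_prod (fun w _ => by positivity) fun w _ =>
    pow_le_pow_left₀ (apply_nonneg w x) (hx w) _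

open Classical in
lemma trace_eq_sum_mult_mul_re (x : K) :
    ((Algebra.trace ℚ K x : ℚ) : ℝ) =
      ∑ w : InfinitePlace K, (w.mult : ℝ) * (w.embedding x).re := by
  have hsum : (Algebra.trace ℚ K x : ℂ) = ∑ φ : K →+* ℂ, φ x := by
    rw [← eq_ratCast (algebraMap ℚ ℂ), trace_eq_sum_embeddings ℂ]
    exact Fintype.sum_equiv (RingHom.equivRatAlgHom K ℂ).symm _ _ fun _ => rfl
  have hre (w : InfinitePlace K) (φ) (hφ : φ ∈ ({φ | .mk φ = w} : Finset (K →+* ℂ))) :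
      (φ x).re = (w.embedding x).re := by
    have hφw := (Finset.mem_filter.1 hφ).2
    rw [← w.mk_embedding, InfinitePlace.mk_eq_iff] at hφw
    obtain rfl | hconj := hφw
    · rfl
    · rw [← hconj, ComplexEmbedding.conjugate_coe_eq, Complex.conj_re]
  calc ((Algebra.trace ℚ K x : ℚ) : ℝ) = ∑ φ : K →+* ℂ, (φ x).re := by
        rw [← Complex.re_sum, ← hsum, Complex.ratCast_re]
    _ = ∑ w : InfinitePlace K, (w.mult : ℝ) * (w.embedding x).re := by
        rw [← Finset.sum_fiberwise Finset.univ InfinitePlace.mk]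
        refine Finset.sum_congr rfl fun w _ => ?_
        rw [Finset.sum_congr rfl (hre w), Finset.sum_const, InfinitePlace.card_filter_mk_eq,
          nsmul_eq_mul]

open Classical in
variable (K) in
/-- The extension to `K ⊗ ℝ`, identified with the mixed space, of the trace from `K` to `ℚ`. -/
noncomputable def mixedTrace : mixedEmbedding.mixedSpace K →L[ℝ] ℝ :=
  (∑ w, ContinuousLinearMap.proj w) ∘L ContinuousLinearMap.fst ℝ _ _ +
    (∑ w, (2 : ℝ) • Complex.reCLM ∘L ContinuousLinearMap.proj w) ∘L ContinuousLinearMap.snd ℝ _ _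

open Classical in
lemma mixedTrace_apply (t : mixedEmbedding.mixedSpace K) :
    mixedTrace K t = ∑ w, t.1 w + ∑ w, 2 * (t.2 w).re := by
  simp [mixedTrace]

open Classical in
lemma sum_infinitePlace_eq {M : Type*} [AddCommMonoid M] (f : InfinitePlace K → M) :
    ∑ w, f w = ∑ w : {w : InfinitePlace K // w.IsReal}, f w +
      ∑ w : {w : InfinitePlace K // w.IsComplex}, f w := by
  rw [← Fintype.sum_subtype_add_sum_subtype fun w : InfinitePlace K => w.IsReal]
  congr 1
  exact Fintype.sum_equiv (Equiv.subtypeEquivRight fun w => InfinitePlace.not_isReal_iff_isComplex)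
    _ _ fun _ => rfl

open Classical in
lemma mixedTrace_mixedEmbedding (x : K) :
    mixedTrace K (mixedEmbedding K x) = (Algebra.trace ℚ K x : ℚ) := by
  rw [mixedTrace_apply, trace_eq_sum_mult_mul_re, sum_infinitePlace_eq]
  congr 1 <;> refine Finset.sum_congr rfl fun w _ => ?_
  · rw [mixedEmbedding.mixedEmbedding_apply_isReal, InfinitePlace.mult_isReal, Nat.cast_one,
      one_mul, ← InfinitePlace.embedding_of_isReal_apply w.2, Complex.ofReal_re]
  · rw [mixedEmbedding.mixedEmbedding_apply_isComplex, InfinitePlace.mult_isComplex, Nat.cast_two]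

open Classical in
lemma normAtPlace_le_norm (w : InfinitePlace K) (t : mixedEmbedding.mixedSpace K) :
    mixedEmbedding.normAtPlace w t ≤ ‖t‖ := by
  rw [mixedEmbedding.norm_eq_sup'_normAtPlace]
  exact Finset.le_sup' (mixedEmbedding.normAtPlace · t) (Finset.mem_univ w)

open Classical in
lemma norm_mixedEmbedding_le {x : K} {R : ℝ} (hx : ∀ w : InfinitePlace K, w x ≤ R) :
    ‖mixedEmbedding K x‖ ≤ R := by
  rw [mixedEmbedding.norm_eq_sup'_normAtPlace]
  exact Finset.sup'_le _ _ fun w _ => by simpa only [mixedEmbedding.normAtPlace_apply] using hx w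

open Classical in
lemma abs_mixedTrace_le (t : mixedEmbedding.mixedSpace K) :
    |mixedTrace K t| ≤ Module.finrank ℚ K * ‖t‖ := by
  calc |mixedTrace K t| ≤ ∑ w : InfinitePlace K, w.mult * mixedEmbedding.normAtPlace w t := by
        rw [mixedTrace_apply, sum_infinitePlace_eq]
        refine (abs_add_le _ _).trans (add_le_add ?_ ?_) <;>
          refine (Finset.abs_sum_le_sum_abs _ _).trans (Finset.sum_le_sum fun w _ => ?_)
        · rw [InfinitePlace.mult_isReal, mixedEmbedding.normAtPlace_apply_of_isReal w.2,
            Nat.cast_one, one_mul, Real.norm_eq_abs]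
        · rw [InfinitePlace.mult_isComplex, mixedEmbedding.normAtPlace_apply_of_isComplex w.2,
            Nat.cast_two, abs_mul, abs_two]
          exact mul_le_mul_of_nonneg_left (Complex.abs_re_le_norm _) zero_le_two
    _ ≤ ∑ w : InfinitePlace K, w.mult * ‖t‖ := by
        gcongr with w
        exact normAtPlace_le_norm w t
    _ = Module.finrank ℚ K * ‖t‖ := by
        rw [← Finset.sum_mul, ← InfinitePlace.sum_mult_eq, Nat.cast_sum]

open Classical in
/-- The linear form `t ↦ Tr(at)` on the mixed space of `K`. -/
noncomputable def traceFunctional (a : K) : mixedEmbedding.mixedSpace K →L[ℝ] ℝ :=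
  mixedTrace K ∘L ContinuousLinearMap.mul ℝ _ (mixedEmbedding K a)

lemma traceFunctional_mixedEmbedding (a x : K) :
    traceFunctional a (mixedEmbedding K x) = (Algebra.trace ℚ K (a * x) : ℚ) := by
  rw [traceFunctional, ContinuousLinearMap.comp_apply, ContinuousLinearMap.mul_apply', ← map_mul,
    mixedTrace_mixedEmbedding]

open Classical in
lemma abs_traceFunctional_le {a : K} {R : ℝ} (ha : ∀ w : InfinitePlace K, w a ≤ R)
    (t : mixedEmbedding.mixedSpace K) :
    |traceFunctional a t| ≤ Module.finrank ℚ K * (R * ‖t‖) := by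
  refine (abs_mixedTrace_le _).trans ?_
  gcongr
  exact (norm_mul_le _ _).trans (by gcongr; exact norm_mixedEmbedding_le ha)

lemma traceFunctional_injective :
    Function.Injective (traceFunctional : K → mixedEmbedding.mixedSpace K →L[ℝ] ℝ) := by
  intro a b hab
  refine sub_eq_zero.1 ((traceForm_nondegenerate ℚ K).1 _ fun x => ?_)
  have hx := congrArg (· (mixedEmbedding K x)) hab
  simp only [traceFunctional_mixedEmbedding] at hx
  rw [Algebra.traceForm_apply, sub_mul, map_sub, sub_eq_zero]
  exact_mod_cast hx

variable (K) in
/-- The inverse different of `K`, the dual of `𝓞 K` under the trace form. -/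
noncomputable def inverseDifferent : (FractionalIdeal (𝓞 K)⁰ K)ˣ :=
  Units.mk0 (FractionalIdeal.dual ℤ ℚ 1) (FractionalIdeal.dual_ne_zero ℤ ℚ one_ne_zero)

variable (K) in
lemma absNorm_inverseDifferent :
    (FractionalIdeal.absNorm (inverseDifferent K : FractionalIdeal (𝓞 K)⁰ K) : ℝ) =
      |(discr K : ℝ)|⁻¹ := by
  rw [inverseDifferent, Units.val_mk0, ← inv_inv (FractionalIdeal.dual ℤ ℚ 1),
    ← coeIdeal_differentIdeal ℤ ℚ K (𝓞 K), map_inv₀, FractionalIdeal.coeIdeal_absNorm,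
    absNorm_differentIdeal K (𝓞 K), Nat.cast_natAbs]
  push_cast
  rfl

lemma exists_int_eq_traceFunctional (a : 𝓞 K) {t : mixedEmbedding.mixedSpace K}
    (ht : t ∈ mixedEmbedding.idealLattice K (inverseDifferent K)) :
    ∃ m : ℤ, traceFunctional (a : K) t = m := by
  obtain ⟨x, hx, rfl⟩ := (mixedEmbedding.mem_idealLattice K _).1 ht
  have hone : (1 : FractionalIdeal (𝓞 K)⁰ K) ≠ 0 := one_ne_zero
  obtain ⟨m, hm⟩ := (FractionalIdeal.mem_dual (A := ℤ) (K := ℚ) hone).1 hx (a : K)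
    ((FractionalIdeal.mem_one_iff (𝓞 K)⁰).2 ⟨a, rfl⟩)
  refine ⟨m, ?_⟩
  rw [traceFunctional_mixedEmbedding, mul_comm, ← Algebra.traceForm_apply, ← hm]
  simp

lemma exists_coeIdeal_eq_spanSingleton_mul_inv {A F : Type*} [CommRing A] [IsDedekindDomain A]
    [Field F] [Algebra A F] [IsFractionRing A F] {I : FractionalIdeal A⁰ F} (hI : I ≠ 0) {x : F}
    (hx : x ∈ I) :
    ∃ J : Ideal A, (J : FractionalIdeal A⁰ F) = FractionalIdeal.spanSingleton A⁰ x * I⁻¹ := by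
  refine FractionalIdeal.le_one_iff_exists_coeIdeal.1 ?_
  rw [← mul_inv_cancel₀ hI]
  exact mul_le_mul_left (FractionalIdeal.spanSingleton_le_iff_mem.2 hx) _

lemma absNorm_le_abs_norm_of_mem {I : FractionalIdeal (𝓞 K)⁰ K} {x : K} (hxI : x ∈ I)
    (hx : x ≠ 0) : FractionalIdeal.absNorm I ≤ |Algebra.norm ℚ x| := by
  have hI : I ≠ 0 := by
    rintro rfl
    exact hx ((FractionalIdeal.mem_zero_iff _).1 hxI)
  obtain ⟨J, hJ⟩ := exists_coeIdeal_eq_spanSingleton_mul_inv hI hxI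
  have hJ0 : Ideal.absNorm J ≠ 0 := by
    rw [Ne, Ideal.absNorm_eq_zero_iff, ← FractionalIdeal.coeIdeal_eq_zero (K := K), hJ]
    exact mul_ne_zero (FractionalIdeal.spanSingleton_ne_zero_iff.2 hx) (inv_ne_zero hI)
  calc FractionalIdeal.absNorm I ≤ Ideal.absNorm J * FractionalIdeal.absNorm I :=
        le_mul_of_one_le_left (FractionalIdeal.absNorm_nonneg I)
          (by exact_mod_cast Nat.one_le_iff_ne_zero.2 hJ0)
    _ = |Algebra.norm ℚ x| := by
        rw [← FractionalIdeal.coeIdeal_absNorm (K := K), ← map_mul, hJ, inv_mul_cancel_right₀ hI,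
          FractionalIdeal.absNorm_span_singleton]

open Classical in
lemma pairwise_disjoint_vadd_ball {r : ℝ}
    (hr : (2 * r) ^ Module.finrank ℚ K * |(discr K : ℝ)| < 1) :
    Pairwise fun γ γ' : (mixedEmbedding.idealLattice K (inverseDifferent K)).toAddSubgroup =>
      Disjoint (γ +ᵥ Metric.ball (0 : mixedEmbedding.mixedSpace K) r)
        (γ' +ᵥ Metric.ball (0 : mixedEmbedding.mixedSpace K) r) := by
  intro γ γ' hne
  simp only [AddSubgroup.vadd_def]
  rw [Metric.vadd_ball, Metric.vadd_ball, vadd_eq_add, vadd_eq_add,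
    add_zero, add_zero]
  refine Metric.ball_disjoint_ball (le_of_not_gt fun hlt => ?_)
  obtain ⟨x, hx, hxγ⟩ := (mixedEmbedding.mem_idealLattice K _).1 (sub_mem γ.2 γ'.2)
  have hx0 : x ≠ 0 := by
    rintro rfl
    rw [map_zero] at hxγ
    exact hne (Subtype.ext (sub_eq_zero.1 hxγ.symm))
  have hle : |(discr K : ℝ)|⁻¹ ≤ (2 * r) ^ Module.finrank ℚ K := by
    rw [← absNorm_inverseDifferent]
    refine (Rat.cast_le.2 (absNorm_le_abs_norm_of_mem hx hx0)).trans
      (abs_norm_le_pow_finrank fun w => ?_)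
    rw [← mixedEmbedding.normAtPlace_apply, hxγ]
    rw [dist_eq_norm] at hlt
    exact (normAtPlace_le_norm w _).trans (by linarith)
  have hD := one_le_abs_discr K
  rw [inv_le_iff_one_le_mul₀ (by positivity)] at hle
  linarith

open Classical in
lemma pow_finrank_le_volume_ball {r : ℝ} (hr : 0 < r) :
    r ^ Module.finrank ℚ K ≤ volume.real (Metric.ball (0 : mixedEmbedding.mixedSpace K) r) := by
  lift r to NNReal using hr.le
  have hball : Metric.ball (0 : mixedEmbedding.mixedSpace K) r =
      mixedEmbedding.convexBodyLT K fun _ => r := by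
    rw [← Prod.mk_zero_zero, ← ball_prod_same, ball_pi _ hr, ball_pi _ hr]
    rfl
  rw [hball, measureReal_def, mixedEmbedding.convexBodyLT_volume, Finset.prod_pow_eq_pow_sum,
    InfinitePlace.sum_mult_eq, ← ENNReal.coe_mul, ENNReal.coe_toReal, NNReal.coe_mul,
    NNReal.coe_pow]
  exact le_mul_of_one_le_left (by positivity)
    (by exact_mod_cast mixedEmbedding.one_le_convexBodyLTFactor K)

open Classical in
variable (K) in
lemma covolume_inverseDifferent_le :
    ZLattice.covolume (mixedEmbedding.idealLattice K (inverseDifferent K)) ≤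
      (√|(discr K : ℝ)|)⁻¹ := by
  have hD := one_le_abs_discr K
  rw [mixedEmbedding.covolume_idealLattice, absNorm_inverseDifferent]
  calc |(discr K : ℝ)|⁻¹ * 2⁻¹ ^ InfinitePlace.nrComplexPlaces K * √|(discr K : ℝ)|
      ≤ |(discr K : ℝ)|⁻¹ * 1 * √|(discr K : ℝ)| := by
        gcongr
        exact pow_le_one₀ (by norm_num) (by norm_num)
    _ = (√|(discr K : ℝ)|)⁻¹ := by
        rw [mul_one, inv_mul_eq_div, Real.sqrt_div_self]

theorem card_mul_pow_le_of_forall_infinitePlace_le {R r : ℝ} (hr : 0 < r)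
    (hRr : Module.finrank ℚ K * (R * r) ≤ 1 / 8)
    (hrD : (2 * r) ^ Module.finrank ℚ K * |(discr K : ℝ)| < 1) {S : Finset (𝓞 K)}
    (hS : ∀ a ∈ S, ∀ w : InfinitePlace K, w (a : K) ≤ R) :
    S.card * r ^ Module.finrank ℚ K ≤ 2 * (√|(discr K : ℝ)|)⁻¹ := by
  classical
  have hinj : Function.Injective fun a : 𝓞 K => traceFunctional (a : K) :=
    traceFunctional_injective.comp RingOfIntegers.coe_injective
  have : Countable (mixedEmbedding.idealLattice K (inverseDifferent K)).toAddSubgroup :=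
    inferInstanceAs (Countable (mixedEmbedding.idealLattice K (inverseDifferent K)))
  have hF := mixedEmbedding.fundamentalDomain_idealLattice K (inverseDifferent K)
  have hcard := card_mul_measure_le_of_dual (S := S.image fun a : 𝓞 K => traceFunctional (a : K))
    (Γ := (mixedEmbedding.idealLattice K (inverseDifferent K)).toAddSubgroup)
    (μ := volume) hF (ZSpan.fundamentalDomain_isBounded _).measure_lt_top.ne
    (Finset.forall_mem_image.2 fun a _ _ => exists_int_eq_traceFunctional a)
    (Metric.isOpen_ball (x := (0 : mixedEmbedding.mixedSpace K)) (ε := r)).measurableSet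
    (Finset.forall_mem_image.2 fun a ha t ht => ?_) (pairwise_disjoint_vadd_ball hrD)
  · rw [Finset.card_image_of_injective _ hinj,
      ← ZLattice.covolume_eq_measure_fundamentalDomain _ _ hF] at hcard
    calc S.card * r ^ Module.finrank ℚ K ≤ S.card * volume.real (Metric.ball 0 r) := by
          gcongr
          exact pow_finrank_le_volume_ball hr
      _ ≤ _ := hcard
      _ ≤ _ := by
          gcongr
          exact covolume_inverseDifferent_le K
  · refine (abs_traceFunctional_le (hS a ha) t).trans (le_trans ?_ hRr)
    have hR : 0 ≤ R := (apply_nonneg (Classical.arbitrary (InfinitePlace K)) _).trans (hS a ha _)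
    gcongr
    exact (mem_ball_zero_iff.1 ht).le

theorem card_le_of_forall_infinitePlace_le_mul_rootDiscr {c : ℝ} (hc : 0 ≤ c) {S : Finset (𝓞 K)}
    (hS : ∀ a ∈ S, ∀ w : InfinitePlace K, w (a : K) ≤ c * rootDiscr K) :
    S.card ≤ 2 * (8 * Module.finrank ℚ K * (c + 1)) ^ Module.finrank ℚ K * √|(discr K : ℝ)| := by
  set n := Module.finrank ℚ K with hn
  set ρ := rootDiscr K
  have hρn : ρ ^ n = |(discr K : ℝ)| := rootDiscr_pow_finrank K
  have hD := one_le_abs_discr K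
  have hρ1 : 1 ≤ ρ := one_le_rootDiscr K
  have hn1 : (1 : ℝ) ≤ n := by exact_mod_cast (Module.finrank_pos : 0 < Module.finrank ℚ K)
  set q : ℝ := 8 * n * (c + 1) with hq
  have hq8 : 8 ≤ q := by nlinarith
  have hcard := card_mul_pow_le_of_forall_infinitePlace_le (r := (q * ρ)⁻¹) (by positivity)
    (by rw [← hn, hq]; field_simp; linarith) ?_ hS
  · rw [← hn, inv_pow, mul_pow, hρn, ← div_eq_mul_inv, div_le_iff₀ (by positivity)] at hcard
    calc (S.card : ℝ) ≤ 2 * (√|(discr K : ℝ)|)⁻¹ * (q ^ n * |(discr K : ℝ)|) := hcard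
      _ = 2 * q ^ n * (|(discr K : ℝ)| / √|(discr K : ℝ)|) := by ring
      _ = 2 * q ^ n * √|(discr K : ℝ)| := by rw [Real.div_sqrt]
  · rw [← hn, ← hρn, ← mul_pow]
    refine pow_lt_one₀ (by positivity) ?_ Module.finrank_pos.ne'
    rw [mul_inv, mul_assoc, mul_assoc, inv_mul_cancel₀ (by positivity), mul_one,
      ← div_eq_mul_inv, div_lt_one (by positivity)]
    linarith

end SmallIntegers

/-! ### Representatives of the 2-torsion classes -/

section Minkowski

open MeasureTheory
open scoped nonZeroDivisors

variable {K : Type*} [Field K] [NumberField K]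

lemma exists_ne_zero_mem_forall_infinitePlace_lt {I : (FractionalIdeal (𝓞 K)⁰ K)ˣ}
    {f : InfinitePlace K → NNReal}
    (h : 2 ^ Module.finrank ℚ K *
      (FractionalIdeal.absNorm (I : FractionalIdeal (𝓞 K)⁰ K) * √|(discr K : ℝ)|) <
        ∏ w, (f w : ℝ) ^ w.mult) :
    ∃ a ∈ (I : FractionalIdeal (𝓞 K)⁰ K), a ≠ 0 ∧ ∀ w : InfinitePlace K, w a < f w := by
  classical
  refine mixedEmbedding.exists_ne_zero_mem_ideal_lt K I ?_
  have hNI : (0 : ℝ) ≤ FractionalIdeal.absNorm (I : FractionalIdeal (𝓞 K)⁰ K) := by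
    exact_mod_cast FractionalIdeal.absNorm_nonneg (I : FractionalIdeal (𝓞 K)⁰ K)
  rw [← ENNReal.toReal_lt_toReal (mixedEmbedding.minkowskiBound_lt_top K I).ne
    (by rw [mixedEmbedding.convexBodyLT_volume]; exact ENNReal.coe_ne_top),
    mixedEmbedding.minkowskiBound, ENNReal.toReal_mul, ← measureReal_def,
    ← ZLattice.covolume_eq_measure_fundamentalDomain _ _
      (mixedEmbedding.fundamentalDomain_idealLattice K I), mixedEmbedding.covolume_idealLattice,
    mixedEmbedding.convexBodyLT_volume, mixedEmbedding.finrank, ENNReal.toReal_pow,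
    ENNReal.toReal_ofNat, ← ENNReal.coe_mul, ENNReal.coe_toReal, NNReal.coe_mul, NNReal.coe_prod]
  calc _ ≤ FractionalIdeal.absNorm (I : FractionalIdeal (𝓞 K)⁰ K) * 1 * √|(discr K : ℝ)| *
        2 ^ Module.finrank ℚ K := by
        gcongr
        exact pow_le_one₀ (by norm_num) (by norm_num)
    _ = _ := by ring
    _ < _ := h
    _ ≤ _ := by
        simp only [NNReal.coe_pow]
        exact le_mul_of_one_le_left (by positivity)
          (by exact_mod_cast mixedEmbedding.one_le_convexBodyLTFactor K)

lemma prod_sqrt_rootDiscr_div_pow_mult {b : K} (c : ℝ) (hc : 0 ≤ c) :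
    ∏ w : InfinitePlace K, (c * √(rootDiscr K / w b)) ^ w.mult =
      c ^ Module.finrank ℚ K * √(|(discr K : ℝ)| / (|Algebra.norm ℚ b| : ℚ)) := by
  have hρ := one_le_rootDiscr K
  refine (pow_left_inj₀ (Finset.prod_nonneg fun w _ => by positivity) (by positivity)
    two_ne_zero).1 ?_
  have hterm (w : InfinitePlace K) : ((c * √(rootDiscr K / w b)) ^ w.mult) ^ 2 =
      (c ^ 2 * rootDiscr K) ^ w.mult / w b ^ w.mult := by
    rw [pow_right_comm, mul_pow, Real.sq_sqrt (by positivity), ← mul_div_assoc, div_pow]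
  rw [← Finset.prod_pow, Finset.prod_congr rfl fun w _ => hterm w, Finset.prod_div_distrib,
    InfinitePlace.prod_eq_abs_norm, Finset.prod_pow_eq_pow_sum, InfinitePlace.sum_mult_eq,
    mul_pow, rootDiscr_pow_finrank, mul_pow, Real.sq_sqrt (by positivity), pow_right_comm,
    mul_div_assoc]

lemma exists_mem_forall_infinitePlace_sq_mul_le {I : (FractionalIdeal (𝓞 K)⁰ K)ˣ} {b : K}
    (hb : b ≠ 0)
    (hI : FractionalIdeal.absNorm (I : FractionalIdeal (𝓞 K)⁰ K) ^ 2 = |Algebra.norm ℚ b|⁻¹) :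
    ∃ a ∈ (I : FractionalIdeal (𝓞 K)⁰ K), a ≠ 0 ∧
      ∀ w : InfinitePlace K, w (a ^ 2 * b) ≤ 9 * rootDiscr K := by
  have hρ := one_le_rootDiscr K
  have hD := one_le_abs_discr K
  have hNb : (0 : ℝ) < (|Algebra.norm ℚ b| : ℚ) := by
    exact_mod_cast abs_pos.2 ((Algebra.norm_ne_zero_iff).2 hb)
  have hNI : (FractionalIdeal.absNorm (I : FractionalIdeal (𝓞 K)⁰ K) : ℝ) =
      √((|Algebra.norm ℚ b| : ℚ) : ℝ)⁻¹ := by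
    rw [← Rat.cast_inv, ← hI, Rat.cast_pow, Real.sqrt_sq
      (by exact_mod_cast FractionalIdeal.absNorm_nonneg _)]
  obtain ⟨a, haI, ha0, ha⟩ := exists_ne_zero_mem_forall_infinitePlace_lt (I := I)
    (f := fun w => .mk (3 * √(rootDiscr K / w b)) (by positivity)) <| by
      simp only [NNReal.coe_mk]
      rw [prod_sqrt_rootDiscr_div_pow_mult 3 zero_le_three, hNI, div_eq_inv_mul,
        Real.sqrt_mul (by positivity)]
      gcongr
      exacts [Module.finrank_pos.ne', by norm_num]
  refine ⟨a, haI, ha0, fun w => ?_⟩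
  have hwb : 0 < w b := InfinitePlace.pos_iff.2 hb
  calc w (a ^ 2 * b) = w a ^ 2 * w b := by rw [map_mul, map_pow]
    _ ≤ (3 * √(rootDiscr K / w b)) ^ 2 * w b := by
        gcongr
        exact (ha w).le
    _ = 9 * rootDiscr K := by
        rw [mul_pow, Real.sq_sqrt (by positivity)]
        field_simp
        norm_num

lemma sq_eq_span_singleton_of_spanSingleton_mul_eq {A F : Type*} [CommRing A]
    [Field F] [Algebra A F] [IsFractionRing A F] {I J : Ideal A} {β : A} {κ : F}
    (hI : I ^ 2 = Ideal.span {β})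
    (hJ : (J : FractionalIdeal A⁰ F) = FractionalIdeal.spanSingleton A⁰ κ * I) :
    ∃ α : A, algebraMap A F α = κ ^ 2 * algebraMap A F β ∧ J ^ 2 = Ideal.span {α} := by
  have hJ2 : ((J ^ 2 : Ideal A) : FractionalIdeal A⁰ F) =
      FractionalIdeal.spanSingleton A⁰ (κ ^ 2 * algebraMap A F β) := by
    rw [FractionalIdeal.coeIdeal_pow, hJ, mul_pow, ← FractionalIdeal.coeIdeal_pow, hI,
      FractionalIdeal.coeIdeal_span_singleton, FractionalIdeal.spanSingleton_pow,
      FractionalIdeal.spanSingleton_mul_spanSingleton]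
  obtain ⟨α, hα⟩ := (FractionalIdeal.mem_one_iff A⁰).1 (FractionalIdeal.coeIdeal_le_one
    (hJ2 ▸ FractionalIdeal.mem_spanSingleton_self A⁰ (κ ^ 2 * algebraMap A F β)))
  refine ⟨α, hα, FractionalIdeal.coeIdeal_injective (K := F) ?_⟩
  simp only [hJ2, FractionalIdeal.coeIdeal_span_singleton, hα]

theorem exists_mk0_eq_and_sq_eq_span_singleton {c : ClassGroup (𝓞 K)} (hc : c ^ 2 = 1) :
    ∃ (J : (Ideal (𝓞 K))⁰) (α : 𝓞 K), ClassGroup.mk0 J = c ∧ α ≠ 0 ∧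
      (J : Ideal (𝓞 K)) ^ 2 = Ideal.span {α} ∧
      ∀ w : InfinitePlace K, w (α : K) ≤ 9 * rootDiscr K := by
  obtain ⟨I, rfl⟩ := ClassGroup.mk0_surjective c
  have hI0 : (I : Ideal (𝓞 K)) ≠ 0 := nonZeroDivisors.coe_ne_zero I
  have hI0' : ((I : Ideal (𝓞 K)) : FractionalIdeal (𝓞 K)⁰ K) ≠ 0 :=
    FractionalIdeal.coeIdeal_ne_zero.2 hI0
  rw [← map_pow, ClassGroup.mk0_eq_one_iff] at hc
  obtain ⟨β, hβ⟩ := hc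
  rw [SubmonoidClass.coe_pow, Ideal.submodule_span_eq] at hβ
  have hβ0 : (β : K) ≠ 0 := by
    rw [RingOfIntegers.coe_ne_zero_iff]
    rintro rfl
    exact pow_ne_zero 2 hI0 (by simpa using hβ)
  obtain ⟨κ, hκ, hκ0, hκβ⟩ := exists_mem_forall_infinitePlace_sq_mul_le
    (I := (Units.mk0 _ hI0')⁻¹) hβ0 <| by
      rw [Units.val_inv_eq_inv_val, Units.val_mk0, map_inv₀, inv_pow, ← map_pow,
        ← FractionalIdeal.coeIdeal_pow, hβ, FractionalIdeal.coeIdeal_span_singleton,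
        FractionalIdeal.absNorm_span_singleton]
  rw [Units.val_inv_eq_inv_val, Units.val_mk0] at hκ
  obtain ⟨J, hJ⟩ := exists_coeIdeal_eq_spanSingleton_mul_inv (inv_ne_zero hI0') hκ
  rw [inv_inv] at hJ
  obtain ⟨α, hα, hJα⟩ := sq_eq_span_singleton_of_spanSingleton_mul_eq hβ hJ
  have hJ0 : J ≠ 0 := by
    refine FractionalIdeal.coeIdeal_ne_zero.1 (?_ : (J : FractionalIdeal (𝓞 K)⁰ K) ≠ 0)
    rw [hJ]
    exact mul_ne_zero (FractionalIdeal.spanSingleton_ne_zero_iff.2 hκ0) hI0'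
  refine ⟨⟨J, mem_nonZeroDivisors_of_ne_zero hJ0⟩, α, ?_, ?_, hJα, fun w => ?_⟩
  · exact ((ClassGroup.mk0_eq_mk0_iff_exists_fraction_ring K).2 ⟨κ, hκ0, hJ.symm⟩).symm
  · rintro rfl
    exact pow_ne_zero 2 hJ0 (by simpa using hJα)
  · rw [RingOfIntegers.coe_eq_algebraMap, hα]
    exact hκβ w

end Minkowski

/-! ### Integral translates with norm plus or minus a square -/

section NormPolynomial

open Polynomial
open scoped IntermediateField

lemma norm_algebraMap_sub_eq_eval_minpoly_pow {k F : Type*} [Field k] [Field F] [Algebra k F]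
    [FiniteDimensional k F] (x : k) (a : F) :
    Algebra.norm k (algebraMap k F x - a) = (minpoly k a).eval x ^ Module.finrank k⟮a⟯ F := by
  let pb := IntermediateField.adjoin.powerBasis (Algebra.IsIntegral.isIntegral (R := k) a)
  have hsub : algebraMap k F x - a = algebraMap k⟮a⟯ F (algebraMap k k⟮a⟯ x - pb.gen) := by
    rw [map_sub, IntermediateField.adjoin.powerBasis_gen,
      IntermediateField.AdjoinSimple.algebraMap_gen, ← IsScalarTower.algebraMap_apply]
  have hnorm : Algebra.norm k (algebraMap k k⟮a⟯ x - pb.gen) = (minpoly k pb.gen).eval x := by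
    rw [← charpoly_leftMulMatrix, Matrix.eval_charpoly, Algebra.norm_eq_matrix_det pb.basis,
      map_sub, AlgHom.commutes]
    rfl
  rw [hsub, ← Algebra.norm_norm (R := k) (S := k⟮a⟯), Algebra.norm_algebraMap, map_pow, hnorm,
    IntermediateField.adjoin.powerBasis_gen, IntermediateField.minpoly_gen]

variable {K : Type*} [Field K] [NumberField K]

lemma map_minpoly_int_eq (a : 𝓞 K) :
    (minpoly ℤ a).map (Int.castRingHom ℚ) = minpoly ℚ (a : K) :=
  (minpoly.isIntegrallyClosed_eq_field_fractions ℚ K a.isIntegral).symm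

lemma norm_intCast_sub_eq_eval_minpoly_pow (x : ℤ) (a : 𝓞 K) :
    Algebra.norm ℤ ((x : 𝓞 K) - a) =
      (minpoly ℤ a ^ Module.finrank ℚ⟮(a : K)⟯ K).eval x := by
  have hcoe : (((x : 𝓞 K) - a : 𝓞 K) : K) = algebraMap ℚ K x - a := by simp
  have h : ((Algebra.norm ℤ ((x : 𝓞 K) - a) : ℤ) : ℚ) =
      ((minpoly ℤ a).eval x : ℤ) ^ Module.finrank ℚ⟮(a : K)⟯ K := by
    rw [Algebra.coe_norm_int, hcoe, norm_algebraMap_sub_eq_eval_minpoly_pow,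
      ← map_minpoly_int_eq, eval_intCast_map, eq_intCast, Int.cast_id]
  rw [eval_pow]
  exact_mod_cast h

lemma natDegree_minpoly_pow_finrank (a : 𝓞 K) :
    (minpoly ℤ a ^ Module.finrank ℚ⟮(a : K)⟯ K).natDegree = Module.finrank ℚ K := by
  have hmonic : (minpoly ℤ a).Monic := minpoly.monic a.isIntegral
  rw [hmonic.natDegree_pow, ← hmonic.natDegree_map (Int.castRingHom ℚ), map_minpoly_int_eq,
    ← IntermediateField.adjoin.finrank (Algebra.IsIntegral.isIntegral (a : K)), mul_comm,
    Module.finrank_mul_finrank]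

lemma not_isSquare_of_associated_prime_pow {M : Type*} [CommMonoidWithZero M] [IsCancelMulZero M]
    [WfDvdMonoid M] {p a : M} (hp : Prime p) {k : ℕ} (hk : Odd k) (ha : Associated a (p ^ k)) :
    ¬ IsSquare a := by
  rintro ⟨b, rfl⟩
  have hb : b ≠ 0 := by
    rintro rfl
    exact pow_ne_zero k hp.ne_zero (ha.eq_zero_iff.1 (mul_zero 0))
  have hmult : emultiplicity p b + emultiplicity p b = k := by
    rw [← emultiplicity_mul hp, emultiplicity_eq_of_associated_right ha,
      emultiplicity_pow_self hp.ne_zero hp.not_isUnit]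
  rw [(FiniteMultiplicity.of_prime_left hp hb).emultiplicity_eq_multiplicity] at hmult
  exact Nat.not_even_iff_odd.2 hk ⟨_, by exact_mod_cast hmult.symm⟩

lemma exists_card_isSquare_natAbs_eval_le (n : ℕ) (c : ℝ) {δ : ℝ} (hδ : 0 < δ) :
    ∃ A : ℝ, 0 < A ∧ ∀ B : ℝ, 1 ≤ B → ∀ f : ℤ[X], f.IsPrimitive → f.natDegree = n →
      ¬ IsSquare (f.map (Int.castRingHom ℚ)) → ¬ IsSquare ((-f).map (Int.castRingHom ℚ)) →
      ∀ T : Finset ℤ, (∀ x ∈ T, |(x : ℝ)| ≤ B) → (∀ x ∈ T, |((f.eval x : ℤ) : ℝ)| ≤ c * B ^ n) →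
      (∀ x ∈ T, IsSquare (f.eval x).natAbs) → (T.card : ℝ) ≤ A * B ^ (1 / 2 + δ) := by
  obtain ⟨A, hA, hcard⟩ := exists_card_isSquare_eval_le n c hδ
  refine ⟨2 * A, by positivity, fun B hB f hf hdeg hsq hsq_neg T hTB hTc hTsq => ?_⟩
  have hpos : ((T.filter fun x => IsSquare (f.eval x)).card : ℝ) ≤ A * B ^ (1 / 2 + δ) := by
    refine hcard B hB f hf hdeg hsq _ (fun x hx => hTB x (Finset.mem_filter.1 hx).1)
      (fun x hx => ?_) fun x hx => (Finset.mem_filter.1 hx).2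
    exact (le_abs_self _).trans (hTc x (Finset.mem_filter.1 hx).1)
  have hneg : ((T.filter fun x => IsSquare ((-f).eval x)).card : ℝ) ≤ A * B ^ (1 / 2 + δ) := by
    refine hcard B hB (-f) (fun r hr => hf r (dvd_neg.1 hr)) (by rw [natDegree_neg, hdeg]) hsq_neg _
      (fun x hx => hTB x (Finset.mem_filter.1 hx).1)
      (fun x hx => ?_) fun x hx => (Finset.mem_filter.1 hx).2
    rw [eval_neg, Int.cast_neg]
    exact (neg_le_abs _).trans (hTc x (Finset.mem_filter.1 hx).1)
  have hunion : T ⊆ (T.filter fun x => IsSquare (f.eval x)) ∪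
      T.filter fun x => IsSquare ((-f).eval x) := by
    intro x hx
    obtain ⟨y, hy⟩ := hTsq x hx
    rw [Finset.mem_union, Finset.mem_filter, Finset.mem_filter, eval_neg]
    rcases Int.natAbs_eq (f.eval x) with h | h
    · exact .inl ⟨hx, y, by rw [h, hy, Nat.cast_mul]⟩
    · exact .inr ⟨hx, y, by rw [h, neg_neg, hy, Nat.cast_mul]⟩
  have hle : (T.card : ℝ) ≤ (T.filter fun x => IsSquare (f.eval x)).card +
      (T.filter fun x => IsSquare ((-f).eval x)).card := by
    exact_mod_cast (Finset.card_le_card hunion).trans (Finset.card_union_le _ _)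
  linarith

end NormPolynomial

section IntegerTranslates

open Polynomial
open scoped IntermediateField

/-- The class of `a` modulo translation by integers. -/
def intCoset {R : Type*} [Ring R] (a : R) : R ⧸ (Int.castAddHom R).range := a

lemma intCoset_eq_intCoset_iff {R : Type*} [Ring R] {a b : R} :
    intCoset a = intCoset b ↔ ∃ x : ℤ, b = a + x := by
  rw [intCoset, intCoset, QuotientAddGroup.eq]
  simp only [AddMonoidHom.mem_range, Int.coe_castAddHom, eq_neg_add_iff_add_eq, eq_comm]

open Classical in
lemma exists_finset_card_eq_card_image_intCoset_mul {R : Type*} [Ring R] [CharZero R]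
    (S : Finset R) (N : ℕ) :
    ∃ T : Finset R, T.card = (S.image intCoset).card * N ∧
      ∀ b ∈ T, ∃ a ∈ S, ∃ i < N, b = a + (i : R) := by
  have hrep : ∀ q ∈ S.image intCoset, ∃ a ∈ S, intCoset a = q := fun q hq => Finset.mem_image.1 hq
  choose! rep hrepS hrep using hrep
  have hinj : Set.InjOn (fun p : _ × ℕ => rep p.1 + (p.2 : R))
      (S.image intCoset ×ˢ Finset.range N : Finset _) := by
    rintro ⟨q, i⟩ hq ⟨q', i'⟩ hq' (heq : rep q + (i : R) = rep q' + (i' : R))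
    obtain rfl : q = q' := by
      rw [← hrep q (Finset.mem_product.1 hq).1, ← hrep q' (Finset.mem_product.1 hq').1,
        intCoset_eq_intCoset_iff]
      exact ⟨i - i', by push_cast; rw [← add_sub_assoc, heq, add_sub_cancel_right]⟩
    rw [Nat.cast_injective (add_left_cancel heq)]
  refine ⟨(S.image intCoset ×ˢ Finset.range N).image fun p => rep p.1 + (p.2 : R), ?_, ?_⟩
  · rw [Finset.card_image_of_injOn hinj, Finset.card_product, Finset.card_range]
  · intro b hb
    obtain ⟨⟨q, i⟩, hqi, rfl⟩ := Finset.mem_image.1 hb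
    obtain ⟨hq, hi⟩ := Finset.mem_product.1 hqi
    exact ⟨rep q, hrepS q hq, i, Finset.mem_range.1 hi, rfl⟩

lemma infinitePlace_intCast {K : Type*} [Field K] (w : InfinitePlace K) (x : ℤ) :
    w (x : K) = |(x : ℝ)| := by
  rw [← InfinitePlace.norm_embedding_eq, map_intCast, Complex.norm_intCast]

lemma infinitePlace_sub_le {K : Type*} [Field K] (w : InfinitePlace K) (a b : K) :
    w (a - b) ≤ w a + w b := by
  simp only [← InfinitePlace.norm_embedding_eq, map_sub]
  exact norm_sub_le _ _

variable {K : Type*} [Field K] [NumberField K]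

open Classical in
lemma card_image_intCoset_mul_rootDiscr_le {c : ℝ} (hc : 0 ≤ c) {S : Finset (𝓞 K)}
    (hS : ∀ a ∈ S, ∀ w : InfinitePlace K, w (a : K) ≤ c * rootDiscr K) :
    (S.image intCoset).card * rootDiscr K ≤
      2 * (8 * Module.finrank ℚ K * (c + 2)) ^ Module.finrank ℚ K * √|(discr K : ℝ)| := by
  obtain ⟨T, hTcard, hT⟩ :=
    exists_finset_card_eq_card_image_intCoset_mul S (⌊rootDiscr K⌋₊ + 1)
  have hTsize : ∀ b ∈ T, ∀ w : InfinitePlace K, w (b : K) ≤ (c + 1) * rootDiscr K := by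
    intro b hb w
    obtain ⟨a, ha, i, hi, rfl⟩ := hT b hb
    have hiρ : (i : ℝ) ≤ rootDiscr K :=
      (Nat.le_floor_iff (zero_le_one.trans (one_le_rootDiscr K))).1 (Nat.lt_succ_iff.1 hi)
    calc w ((a + (i : 𝓞 K) : 𝓞 K) : K) = w ((a : K) - ((-i : ℤ) : K)) := by simp
      _ ≤ w (a : K) + w ((-i : ℤ) : K) := infinitePlace_sub_le w _ _
      _ = w (a : K) + i := by rw [infinitePlace_intCast]; simp
      _ ≤ (c + 1) * rootDiscr K := by linarith [hS a ha w]
  calc (S.image intCoset).card * rootDiscr K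
      ≤ (S.image intCoset).card * (⌊rootDiscr K⌋₊ + 1) := by
        gcongr
        exact (Nat.lt_floor_add_one _).le
    _ = T.card := by rw [hTcard]; push_cast; rfl
    _ ≤ 2 * (8 * Module.finrank ℚ K * (c + 1 + 1)) ^ Module.finrank ℚ K * √|(discr K : ℝ)| :=
        card_le_of_forall_infinitePlace_le_mul_rootDiscr (by positivity) hTsize
    _ = _ := by ring

lemma not_isSquare_map_minpoly_pow {a : 𝓞 K} (ha : Odd (Module.finrank ℚ⟮(a : K)⟯ K)) {f : ℤ[X]}
    (hf : Associated f (minpoly ℤ a ^ Module.finrank ℚ⟮(a : K)⟯ K)) :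
    ¬ IsSquare (f.map (Int.castRingHom ℚ)) := by
  refine not_isSquare_of_associated_prime_pow
    (minpoly.irreducible (Algebra.IsIntegral.isIntegral (a : K))).prime ha ?_
  rw [← map_minpoly_int_eq, ← Polynomial.map_pow]
  exact hf.map (mapRingHom (Int.castRingHom ℚ))

lemma abs_norm_int_le_pow_finrank {a : 𝓞 K} {R : ℝ} (ha : ∀ w : InfinitePlace K, w (a : K) ≤ R) :
    |((Algebra.norm ℤ a : ℤ) : ℝ)| ≤ R ^ Module.finrank ℚ K := by
  refine (le_of_eq ?_).trans (abs_norm_le_pow_finrank ha)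
  rw [← Algebra.coe_norm_int]
  push_cast
  rfl

lemma natAbs_norm_neg (a : 𝓞 K) : (Algebra.norm ℤ (-a)).natAbs = (Algebra.norm ℤ a).natAbs := by
  rw [← Ideal.absNorm_span_singleton, Ideal.span_singleton_neg, Ideal.absNorm_span_singleton]

end IntegerTranslates

section OddCoindex

open scoped IntermediateField

lemma exists_card_isSquare_norm_sub_le (n : ℕ) {δ : ℝ} (hδ : 0 < δ) :
    ∃ A : ℝ, 0 < A ∧ ∀ (K : Type*) [Field K] [NumberField K], Module.finrank ℚ K = n →
      ∀ t : 𝓞 K, Odd (Module.finrank ℚ⟮(t : K)⟯ K) → ∀ B : ℝ, 1 ≤ B →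
      (∀ w : InfinitePlace K, w (t : K) ≤ B) → ∀ T : Finset ℤ, (∀ x ∈ T, |(x : ℝ)| ≤ B) →
      (∀ x ∈ T, IsSquare (Algebra.norm ℤ ((x : 𝓞 K) - t)).natAbs) →
      (T.card : ℝ) ≤ A * B ^ (1 / 2 + δ) := by
  obtain ⟨A, hA, hcard⟩ := exists_card_isSquare_natAbs_eval_le n (2 ^ n) hδ
  refine ⟨A, hA, fun K _ _ hK t ht B hB htB T hTB hTsq => ?_⟩
  have hmonic : (minpoly ℤ t ^ Module.finrank ℚ⟮(t : K)⟯ K).Monic :=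
    (minpoly.monic t.isIntegral).pow _
  refine hcard B hB (minpoly ℤ t ^ Module.finrank ℚ⟮(t : K)⟯ K) hmonic.isPrimitive
    (by rw [natDegree_minpoly_pow_finrank, hK])
    (not_isSquare_map_minpoly_pow ht (Associated.refl _))
    (not_isSquare_map_minpoly_pow ht (Associated.refl _).neg_left) T hTB (fun x hx => ?_)
    fun x hx => ?_
  · rw [← norm_intCast_sub_eq_eval_minpoly_pow, ← mul_pow, ← hK]
    refine abs_norm_int_le_pow_finrank fun w => ?_
    calc w (((x : 𝓞 K) - t : 𝓞 K) : K) = w ((x : K) - t) := by simp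
      _ ≤ w (x : K) + w (t : K) := infinitePlace_sub_le w _ _
      _ ≤ 2 * B := by
        rw [infinitePlace_intCast]
        linarith [hTB x hx, htB w]
  · rw [← norm_intCast_sub_eq_eval_minpoly_pow]
    exact hTsq x hx

open Classical in
lemma exists_card_filter_intCoset_eq_le (n : ℕ) {δ : ℝ} (hδ : 0 < δ) :
    ∃ A : ℝ, 0 < A ∧ ∀ (K : Type*) [Field K] [NumberField K], Module.finrank ℚ K = n →
      ∀ t : 𝓞 K, Odd (Module.finrank ℚ⟮(t : K)⟯ K) → ∀ R : ℝ, 1 ≤ R →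
      (∀ w : InfinitePlace K, w (t : K) ≤ R) → ∀ S : Finset (𝓞 K),
      (∀ a ∈ S, ∀ w : InfinitePlace K, w (a : K) ≤ R) →
      (∀ a ∈ S, IsSquare (Algebra.norm ℤ a).natAbs) →
      ((S.filter fun a => intCoset a = intCoset t).card : ℝ) ≤ A * (2 * R) ^ (1 / 2 + δ) := by
  obtain ⟨A, hA, hcard⟩ := exists_card_isSquare_norm_sub_le n hδ
  refine ⟨A, hA, fun K _ _ hK t ht R hR htR S hSR hSsq => ?_⟩
  have hshift : ∀ a ∈ S.filter fun a => intCoset a = intCoset t, ∃ x : ℤ, t = a + x :=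
    fun a ha => intCoset_eq_intCoset_iff.1 (Finset.mem_filter.1 ha).2
  choose! shift hshift using hshift
  have hinj : Set.InjOn shift (S.filter fun a => intCoset a = intCoset t) :=
    fun a ha b hb hab => by
      rw [eq_sub_of_add_eq (hshift a ha).symm, eq_sub_of_add_eq (hshift b hb).symm, hab]
  have hshift_eq : ∀ a ∈ S.filter fun a => intCoset a = intCoset t, (shift a : 𝓞 K) = t - a :=
    fun a ha => eq_sub_of_add_eq' (hshift a ha).symm
  rw [← Finset.card_image_of_injOn hinj]
  refine hcard K hK t ht (2 * R) (by linarith) (fun w => (htR w).trans (by linarith)) _ ?_ ?_ <;>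
    refine Finset.forall_mem_image.2 fun a ha => ?_
  · obtain ⟨w⟩ : Nonempty (InfinitePlace K) := inferInstance
    calc |(shift a : ℝ)| = w ((shift a : 𝓞 K) : K) := by
          rw [← infinitePlace_intCast w]; simp
      _ = w ((t : K) - a) := by rw [hshift_eq a ha]; simp
      _ ≤ w (t : K) + w (a : K) := infinitePlace_sub_le w _ _
      _ ≤ 2 * R := by linarith [htR w, hSR a (Finset.mem_filter.1 ha).1 w]
  · rw [hshift_eq a ha, sub_sub_cancel_left, natAbs_norm_neg]
    exact hSsq a (Finset.mem_filter.1 ha).1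

lemma rootDiscr_rpow_sub_half_le (K : Type*) [Field K] [NumberField K] {δ : ℝ} (hδ : 0 ≤ δ) :
    rootDiscr K ^ (δ - 1 / 2) ≤
      |(discr K : ℝ)| ^ (δ - 1 / (2 * (Module.finrank ℚ K : ℝ))) := by
  have hn : (1 : ℝ) ≤ Module.finrank ℚ K := by exact_mod_cast Module.finrank_pos
  rw [← rootDiscr_pow_finrank, ← Real.rpow_natCast_mul (zero_le_one.trans (one_le_rootDiscr K))]
  refine Real.rpow_le_rpow_of_exponent_le (one_le_rootDiscr K) ?_
  calc δ - 1 / 2 ≤ Module.finrank ℚ K * δ - 1 / 2 := by nlinarith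
    _ = _ := by field_simp

open Classical in
theorem exists_card_isSquare_norm_le (n : ℕ) {c δ : ℝ} (hc : 1 ≤ c) (hδ : 0 < δ) :
    ∃ C : ℝ, 0 ≤ C ∧ ∀ (K : Type*) [Field K] [NumberField K], Module.finrank ℚ K = n →
      ∀ S : Finset (𝓞 K), (∀ a ∈ S, ∀ w : InfinitePlace K, w (a : K) ≤ c * rootDiscr K) →
      (∀ a ∈ S, Odd (Module.finrank ℚ⟮(a : K)⟯ K)) →
      (∀ a ∈ S, IsSquare (Algebra.norm ℤ a).natAbs) →
      (S.card : ℝ) ≤ C * |(discr K : ℝ)| ^ ((1 : ℝ) / 2 - 1 / (2 * (n : ℝ)) + δ) := by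
  obtain ⟨A, hA, hfibre⟩ := exists_card_filter_intCoset_eq_le n hδ
  refine ⟨2 * (8 * n * (c + 2)) ^ n * (A * (2 * c) ^ (1 / 2 + δ)), by positivity,
    fun K _ _ hK S hSc hSodd hSsq => ?_⟩
  have hρ : 1 ≤ rootDiscr K := one_le_rootDiscr K
  have hfibres : (S.card : ℝ) ≤
      (S.image intCoset).card * (A * (2 * (c * rootDiscr K)) ^ (1 / 2 + δ)) := by
    rw [Finset.card_eq_sum_card_image intCoset S, Nat.cast_sum, ← nsmul_eq_mul]
    refine Finset.sum_le_card_nsmul _ _ _ (Finset.forall_mem_image.2 fun t ht => ?_)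
    exact hfibre K hK t (hSodd t ht) _ (by nlinarith) (hSc t ht) S hSc hSsq
  have hcosets : (S.image intCoset).card * rootDiscr K ≤
      2 * (8 * n * (c + 2)) ^ n * √|(discr K : ℝ)| := by
    rw [← hK]
    exact card_image_intCoset_mul_rootDiscr_le (by linarith) hSc
  have hsplit : (2 * (c * rootDiscr K)) ^ (1 / 2 + δ) =
      (2 * c) ^ (1 / 2 + δ) * (rootDiscr K * rootDiscr K ^ (δ - 1 / 2)) := by
    rw [← mul_assoc, Real.mul_rpow (by positivity) (by positivity),
      ← Real.rpow_one_add' (by positivity) (by linarith)]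
    ring_nf
  calc (S.card : ℝ) ≤ _ := hfibres
    _ = (S.image intCoset).card * rootDiscr K * (A * (2 * c) ^ (1 / 2 + δ)) *
          rootDiscr K ^ (δ - 1 / 2) := by rw [hsplit]; ring
    _ ≤ 2 * (8 * n * (c + 2)) ^ n * √|(discr K : ℝ)| * (A * (2 * c) ^ (1 / 2 + δ)) *
          |(discr K : ℝ)| ^ (δ - 1 / (2 * (n : ℝ))) := by
        gcongr
        exact hK ▸ rootDiscr_rpow_sub_half_le K hδ.le
    _ = _ := by
        rw [Real.sqrt_eq_rpow, mul_right_comm _ (_ ^ _) (A * _), mul_assoc,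
          ← Real.rpow_add (zero_lt_one.trans_le (one_le_abs_discr K))]
        ring_nf

end OddCoindex

/-! ### Divisor bounds -/

section DivisorBound

lemma natCast_add_one_le_div_sub_one_mul_pow {x : ℝ} (hx : 1 < x) (a : ℕ) :
    (a : ℝ) + 1 ≤ x / (x - 1) * x ^ a := by
  have hbernoulli : 1 + a * (x - 1) ≤ x ^ a := one_add_mul_sub_le_pow (by linarith) a
  have hpow : 1 ≤ x ^ a := one_le_pow₀ hx.le
  rw [div_mul_eq_mul_div, le_div_iff₀ (by linarith)]
  nlinarith [mul_nonneg (sub_nonneg.2 hx.le) (sub_nonneg.2 hpow)]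

lemma natCast_add_one_le_ite_mul_rpow_pow {δ : ℝ} (hδ : 0 < δ) {p : ℕ} (hp : 2 ≤ p) (a : ℕ) :
    (a : ℝ) + 1 ≤ (if p < ⌈(2 : ℝ) ^ δ⁻¹⌉₊ then (2 : ℝ) ^ δ / (2 ^ δ - 1) else 1) *
      ((p : ℝ) ^ δ) ^ a := by
  have hp' : (2 : ℝ) ≤ p := by exact_mod_cast hp
  have h2 : 1 < (2 : ℝ) ^ δ := Real.one_lt_rpow one_lt_two hδ
  split_ifs with hlt
  · refine (natCast_add_one_le_div_sub_one_mul_pow h2 a).trans ?_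
    have := sub_pos.2 h2
    gcongr
  · have hlarge : (2 : ℝ) ≤ (p : ℝ) ^ δ :=
      (Real.rpow_inv_le_iff_of_pos zero_le_two (by positivity) hδ).1
        ((Nat.le_ceil _).trans (by exact_mod_cast not_lt.1 hlt))
    calc (a : ℝ) + 1 ≤ 2 ^ a := by exact_mod_cast Nat.lt_two_pow_self
      _ ≤ ((p : ℝ) ^ δ) ^ a := by gcongr
      _ = 1 * ((p : ℝ) ^ δ) ^ a := (one_mul _).symm

lemma prod_primeFactors_pow_factorization {t : ℕ} (ht : t ≠ 0) :
    ∏ p ∈ t.primeFactors, p ^ t.factorization p = t := by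
  rw [← Nat.prod_factorization_eq_prod_primeFactors, Nat.prod_factorization_pow_eq_self ht]

theorem exists_card_divisors_le {δ : ℝ} (hδ : 0 < δ) :
    ∃ C : ℝ, 0 < C ∧ ∀ t : ℕ, (t.divisors.card : ℝ) ≤ C * (t : ℝ) ^ δ := by
  set P := ⌈(2 : ℝ) ^ δ⁻¹⌉₊
  set c : ℝ := 2 ^ δ / (2 ^ δ - 1)
  have h2 : 0 < (2 : ℝ) ^ δ - 1 := sub_pos.2 (Real.one_lt_rpow one_lt_two hδ)
  have hc : 1 ≤ c := (one_le_div h2).2 (by linarith)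
  refine ⟨c ^ P, by positivity, fun t => ?_⟩
  obtain rfl | ht := eq_or_ne t 0
  · simp only [Nat.divisors_zero, Finset.card_empty, Nat.cast_zero]
    positivity
  have hprod : ∏ p ∈ t.primeFactors, ((p : ℝ) ^ δ) ^ t.factorization p = (t : ℝ) ^ δ := by
    simp_rw [Real.rpow_pow_comm (Nat.cast_nonneg _) δ]
    rw [Real.finsetProd_rpow _ _ fun p _ => by positivity]
    exact_mod_cast congrArg (fun m : ℕ => (m : ℝ) ^ δ) (prod_primeFactors_pow_factorization ht)
  rw [Nat.card_divisors ht]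
  calc ((∏ p ∈ t.primeFactors, (t.factorization p + 1) : ℕ) : ℝ)
      = ∏ p ∈ t.primeFactors, ((t.factorization p : ℝ) + 1) := by push_cast; rfl
    _ ≤ ∏ p ∈ t.primeFactors, ((if p < P then c else 1) * ((p : ℝ) ^ δ) ^ t.factorization p) :=
        Finset.prod_le_prod (fun _ _ => by positivity) fun p hp =>
          natCast_add_one_le_ite_mul_rpow_pow hδ (Nat.prime_of_mem_primeFactors hp).two_le _
    _ = c ^ (t.primeFactors.filter (· < P)).card * (t : ℝ) ^ δ := by
        rw [Finset.prod_mul_distrib, hprod, Finset.prod_ite, Finset.prod_const,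
          Finset.prod_const_one, mul_one]
    _ ≤ c ^ P * (t : ℝ) ^ δ := by
        have hsub : t.primeFactors.filter (· < P) ⊆ Finset.range P := fun p hp =>
          Finset.mem_range.2 (Finset.mem_filter.1 hp).2
        gcongr
        exact (Finset.card_le_card hsub).trans_eq (Finset.card_range P)

/-- The number of divisors of `a`, extended-natural-valued so that it is submultiplicative without
finiteness assumptions. -/
noncomputable def divisorCount {M : Type*} [Monoid M] (a : M) : ℕ∞ :=
  {b : M | b ∣ a}.encard

lemma divisorCount_one {M : Type*} [CommMonoid M] [Subsingleton Mˣ] :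
    divisorCount (1 : M) = 1 := by
  have hset : {b : M | b ∣ 1} = {1} :=
    Set.ext fun _ => isUnit_iff_dvd_one.symm.trans isUnit_iff_eq_one
  rw [divisorCount, hset, Set.encard_singleton]

lemma divisorCount_mul_le {M : Type*} [CommMonoid M] [DecompositionMonoid M] (a b : M) :
    divisorCount (a * b) ≤ divisorCount a * divisorCount b := by
  rw [divisorCount, divisorCount, divisorCount, ← Set.encard_prod]
  refine (Set.encard_le_encard fun c (hc : c ∣ a * b) => ?_).trans
    (Set.encard_image_le (fun x : M × M => x.1 * x.2) _)
  obtain ⟨a', b', ha, hb, rfl⟩ := exists_dvd_and_dvd_of_dvd_mul hc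
  exact ⟨(a', b'), ⟨ha, hb⟩, rfl⟩

lemma divisorCount_prime_pow_le {M : Type*} [CommMonoidWithZero M] [IsCancelMulZero M]
    [Subsingleton Mˣ] {p : M} (hp : Prime p) (a : ℕ) : divisorCount (p ^ a) ≤ a + 1 := by
  classical
  have hsub : {b : M | b ∣ p ^ a} ⊆ (Finset.range (a + 1)).image (p ^ ·) := by
    intro b hb
    obtain ⟨i, hi, hbi⟩ := (dvd_prime_pow hp a).1 hb
    exact Finset.mem_coe.2 (Finset.mem_image.2
      ⟨i, Finset.mem_range.2 (Nat.lt_succ_of_le hi), (associated_iff_eq.1 hbi).symm⟩)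
  refine (Set.encard_le_encard hsub).trans ?_
  rw [Set.encard_coe_eq_coe_finsetCard]
  exact_mod_cast Finset.card_image_le.trans (Finset.card_range _).le

lemma divisorCount_multisetProd_pow_le {M : Type*} [CommMonoidWithZero M] [IsCancelMulZero M]
    [DecompositionMonoid M] [Subsingleton Mˣ] {s : Multiset M} (hs : ∀ p ∈ s, Prime p) (a : ℕ) :
    divisorCount (s.prod ^ a) ≤ (a + 1) ^ s.card := by
  induction s using Multiset.induction with
  | empty => simp only [Multiset.prod_zero, one_pow, divisorCount_one, Multiset.card_zero, pow_zero,
      le_refl]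
  | cons p s ih =>
    rw [Multiset.prod_cons, mul_pow, Multiset.card_cons, pow_succ']
    exact (divisorCount_mul_le _ _).trans (mul_le_mul'
      (divisorCount_prime_pow_le (hs p (Multiset.mem_cons_self p s)) a)
      (ih fun q hq => hs q (Multiset.mem_cons_of_mem hq)))

end DivisorBound

section IdealsOfGivenNorm

open UniqueFactorizationMonoid
open scoped ArithmeticFunction.Omega

lemma card_normalizedFactors_le_cardFactors_absNorm {R : Type*} [CommRing R] [IsDedekindDomain R]
    [Module.Free ℤ R] [Module.Finite ℤ R] {I : Ideal R} (hI : I ≠ 0) :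
    (normalizedFactors I).card ≤ Ω (Ideal.absNorm I) := by
  have hprod := Ideal.prod_normalizedFactors_eq_self hI
  have hnorm : ((normalizedFactors I).map Ideal.absNorm).prod = Ideal.absNorm I := by
    rw [← map_multiset_prod, hprod]
  rw [← hnorm, ArithmeticFunction.cardFactors_multiset_prod
    (by rwa [hnorm, Ne, Ideal.absNorm_eq_zero_iff]), Multiset.map_map, ← mul_one (Multiset.card _),
    ← smul_eq_mul, ← Multiset.card_map (Ω ∘ Ideal.absNorm)]
  refine Multiset.card_nsmul_le_sum (Multiset.forall_mem_map_iff.2 fun P hP => ?_)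
  have hPprime := prime_of_normalized_factor P hP
  refine ArithmeticFunction.cardFactors_pos_iff_one_lt.2
    (Nat.one_lt_iff_ne_zero_and_ne_one.2 ⟨?_, ?_⟩)
  · exact (Ideal.absNorm_eq_zero_iff.not).2 hPprime.ne_zero
  · exact (Ideal.absNorm_eq_one_iff.not).2 fun h => hPprime.not_isUnit (Ideal.isUnit_iff.2 h)

variable {K : Type*} [Field K] [NumberField K]

lemma divisorCount_span_prime_pow_le {p : ℕ} (hp : p.Prime) (a : ℕ) :
    divisorCount (Ideal.span {(p : 𝓞 K)} ^ a) ≤ (a + 1) ^ Module.finrank ℚ K := by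
  have hne : Ideal.span {(p : 𝓞 K)} ≠ 0 := by
    rw [Ne, Ideal.zero_eq_bot, Ideal.span_singleton_eq_bot]
    exact_mod_cast hp.ne_zero
  have hcard : (normalizedFactors (Ideal.span {(p : 𝓞 K)})).card ≤ Module.finrank ℚ K := by
    refine (card_normalizedFactors_le_cardFactors_absNorm hne).trans (le_of_eq ?_)
    rw [Ideal.absNorm_span_natCast, RingOfIntegers.rank,
      ArithmeticFunction.cardFactors_apply_prime_pow hp]
  calc divisorCount (Ideal.span {(p : 𝓞 K)} ^ a)
      ≤ (a + 1) ^ (normalizedFactors (Ideal.span {(p : 𝓞 K)})).card := by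
        conv_lhs => rw [← Ideal.prod_normalizedFactors_eq_self hne]
        exact divisorCount_multisetProd_pow_le (fun P hP => prime_of_normalized_factor P hP) a
    _ ≤ (a + 1) ^ Module.finrank ℚ K := pow_le_pow_right₀ le_add_self hcard

lemma divisorCount_span_natCast_le {t : ℕ} (ht : t ≠ 0) :
    divisorCount (Ideal.span {(t : 𝓞 K)}) ≤ (t.divisors.card : ℕ∞) ^ Module.finrank ℚ K := by
  have hfactor : Ideal.span {(t : 𝓞 K)} =
      ∏ p ∈ t.primeFactors, Ideal.span {(p : 𝓞 K)} ^ t.factorization p := by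
    simp_rw [Ideal.span_singleton_pow]
    rw [Ideal.prod_span_singleton]
    exact_mod_cast congrArg (fun m : ℕ => Ideal.span {(m : 𝓞 K)})
      (prod_primeFactors_pow_factorization ht).symm
  rw [hfactor, Nat.card_divisors ht, Nat.cast_prod, ← Finset.prod_pow]
  have := CanonicallyOrderedAdd.toIsOrderedMonoid (R := ℕ∞)
  refine (Finset.le_prod_of_submultiplicative _ divisorCount_one.le divisorCount_mul_le _ _).trans
    (Finset.prod_le_prod' fun p hp => ?_)
  exact_mod_cast divisorCount_span_prime_pow_le (Nat.prime_of_mem_primeFactors hp) _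

theorem card_le_card_divisors_pow_of_absNorm_eq {t : ℕ} (ht : t ≠ 0) {S : Finset (Ideal (𝓞 K))}
    (hS : ∀ J ∈ S, Ideal.absNorm J = t) : S.card ≤ t.divisors.card ^ Module.finrank ℚ K := by
  have hsub : (S : Set (Ideal (𝓞 K))) ⊆ {J | J ∣ Ideal.span {(t : 𝓞 K)}} := fun J hJ =>
    Ideal.dvd_span_singleton.2 (hS J hJ ▸ Ideal.absNorm_mem J)
  have h := (Set.encard_le_encard hsub).trans (divisorCount_span_natCast_le ht)
  rw [Set.encard_coe_eq_coe_finsetCard] at h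
  exact_mod_cast h

end IdealsOfGivenNorm

/-! ### Ideals whose square is generated by an element of a subfield of even index -/

section EvenCoindex

open UniqueFactorizationMonoid
open scoped IntermediateField

open Classical in
lemma even_count_normalizedFactors_of_sq_eq_map {R S : Type*} [CommRing R] [IsDedekindDomain R]
    [CommRing S] [IsDedekindDomain S] [Algebra R S] [FaithfulSMul R S] {a v : Ideal R}
    {J w : Ideal S} (hJ : J ^ 2 = a.map (algebraMap R S)) (ha : a ≠ ⊥) (hv : Prime v)
    (hw : Prime w) [w.LiesOver v] (hvw : v.ramificationIdx' w = 1) :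
    Even ((normalizedFactors a).count v) := by
  have hJ0 : J ^ 2 ≠ 0 := hJ ▸ Ideal.map_ne_bot_of_ne_bot ha
  have hmult := Ideal.IsDedekindDomain.emultiplicity_map_eq_ramificationIdx'_mul ha
    hv.irreducible hw.irreducible hw.ne_zero
  rw [hvw, Nat.cast_one, one_mul, ← hJ,
    emultiplicity_eq_count_normalizedFactors hw.irreducible hJ0,
    emultiplicity_eq_count_normalizedFactors hv.irreducible ha, normalizedFactors_pow,
    normalize_eq, normalize_eq, Multiset.count_nsmul, Nat.cast_inj] at hmult
  exact hmult ▸ even_two_mul _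

open Classical in
lemma even_factorization_absNorm {R : Type*} [CommRing R] [IsDedekindDomain R]
    [Module.Free ℤ R] [Module.Finite ℤ R] {a : Ideal R} (ha : a ≠ ⊥) {p : ℕ}
    (hp : p.Prime)
    (heven : ∀ v : Ideal R, Prime v → (p : R) ∈ v → Even ((normalizedFactors a).count v)) :
    Even ((Ideal.absNorm a).factorization p) := by
  have hfactor : Ideal.absNorm a =
      ∏ v ∈ (normalizedFactors a).toFinset, Ideal.absNorm v ^ (normalizedFactors a).count v := by
    conv_lhs => rw [← Ideal.prod_normalizedFactors_eq_self ha, map_multiset_prod]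
    exact Finset.prod_multiset_map_count _ _
  have hprime : ∀ v ∈ (normalizedFactors a).toFinset, Prime v := fun v hv =>
    prime_of_normalized_factor v (Multiset.mem_toFinset.1 hv)
  rw [hfactor, Nat.factorization_prod fun v hv =>
    pow_ne_zero _ (Ideal.absNorm_eq_zero_iff.not.2 (hprime v hv).ne_zero), Finsupp.finsetSum_apply]
  refine Finset.even_sum _ fun v hv => ?_
  rw [Nat.factorization_pow, Finsupp.smul_apply, smul_eq_mul]
  by_cases hpv : p ∣ Ideal.absNorm v
  · refine (heven v (hprime v hv) ?_).mul_right _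
    obtain ⟨q, hq, hqp, hqv⟩ := Ideal.exists_isMaximal_dvd_of_dvd_absNorm' hp v hpv
    have hpq : (p : ℤ) ∈ q.under ℤ := hqp ▸ Ideal.mem_span_singleton_self _
    have hvmax := (Ideal.isPrime_of_prime (hprime v hv)).isMaximal (hprime v hv).ne_zero
    rw [hvmax.eq_of_le hq.ne_top (Ideal.le_of_dvd hqv)]
    simpa using hpq
  · rw [Nat.factorization_eq_zero_of_not_dvd hpv, mul_zero]
    exact Even.zero

section Extension

variable {F K : Type*} [Field F] [NumberField F] [Field K] [NumberField K] [Algebra F K]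

lemma ramificationIdx'_eq_one_of_not_dvd_discr {p : ℕ} (hp : p.Prime) (hD : ¬ (p : ℤ) ∣ discr K)
    {v : Ideal (𝓞 F)} (hpv : (p : 𝓞 F) ∈ v) (w : Ideal (𝓞 K)) [w.IsPrime] [w.LiesOver v] :
    v.ramificationIdx' w = 1 := by
  have hv : v ≠ ⊥ := by
    rintro rfl
    exact hp.ne_zero (by exact_mod_cast (Submodule.mem_bot _).1 hpv)
  have hpw : (p : 𝓞 K) ∈ w := by simpa using (Ideal.mem_of_liesOver w v _).1 hpv
  have : Algebra.IsUnramifiedAt ℤ w := (not_dvd_discr_iff_forall_mem K (𝓞 K)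
    (Nat.prime_iff_prime_int.1 hp)).1 hD w inferInstance (by exact_mod_cast hpw)
  have : Algebra.IsUnramifiedAt (𝓞 F) w := .of_restrictScalars ℤ w
  rw [Ideal.ramificationIdx'_eq_ramificationIdx v w hv, Ideal.ramificationIdx_eq_one]

lemma even_factorization_absNorm_of_sq_eq_map {p : ℕ} (hp : p.Prime) (hD : ¬ (p : ℤ) ∣ discr K)
    {a : Ideal (𝓞 F)} (ha : a ≠ ⊥) {J : Ideal (𝓞 K)}
    (hJ : J ^ 2 = a.map (algebraMap (𝓞 F) (𝓞 K))) :
    Even ((Ideal.absNorm a).factorization p) := by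
  classical
  refine even_factorization_absNorm ha hp fun v hv hpv => ?_
  have := Ideal.isPrime_of_prime hv
  have := this.isMaximal hv.ne_zero
  obtain ⟨w, hw, hwv⟩ := Ideal.exists_maximal_ideal_liesOver_of_isIntegral (S := 𝓞 K) v
  exact even_count_normalizedFactors_of_sq_eq_map hJ ha hv
    (Ideal.prime_of_isPrime (Ideal.ne_bot_of_liesOver_of_ne_bot hv.ne_zero w) hw.isPrime)
    (ramificationIdx'_eq_one_of_not_dvd_discr hp hD hpv w)

lemma even_factorization_absNorm_of_sq_eq_map_of_even_finrank (hFK : Even (Module.finrank F K))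
    {p : ℕ} (hp : p.Prime) (hD : ¬ (p : ℤ) ∣ discr K) {a : Ideal (𝓞 F)} (ha : a ≠ ⊥)
    {J : Ideal (𝓞 K)} (hJ : J ^ 2 = a.map (algebraMap (𝓞 F) (𝓞 K))) :
    Even ((Ideal.absNorm J).factorization p) := by
  have hnorm := congrArg (fun I => (Ideal.absNorm I).factorization p) hJ
  simp only [map_pow, Ideal.absNorm_algebraMap, ← IsFractionRing.finrank_eq (𝓞 F) F (𝓞 K) K,
    Nat.factorization_pow, Finsupp.smul_apply, smul_eq_mul] at hnorm
  obtain ⟨k, hk⟩ := hFK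
  obtain ⟨m, hm⟩ := even_factorization_absNorm_of_sq_eq_map hp hD ha hJ
  rw [hk, hm] at hnorm
  exact ⟨k * m, by linarith⟩

end Extension

variable {K : Type*} [Field K] [NumberField K]

lemma exists_algebraMap_adjoin_eq (α : 𝓞 K) :
    ∃ a : 𝓞 ℚ⟮(α : K)⟯, algebraMap (𝓞 ℚ⟮(α : K)⟯) (𝓞 K) a = α := by
  have hgen := IntermediateField.AdjoinSimple.algebraMap_gen ℚ (α : K)
  have hgenInt : IsIntegral ℤ (IntermediateField.AdjoinSimple.gen ℚ (α : K)) :=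
    (isIntegral_algebraMap_iff (algebraMap ℚ⟮(α : K)⟯ K).injective).1
      (hgen.symm ▸ α.isIntegral_coe)
  exact ⟨⟨_, hgenInt⟩, RingOfIntegers.ext hgen⟩

theorem even_factorization_absNorm_of_sq_eq_span_singleton {α : 𝓞 K} (hα : α ≠ 0)
    (hev : Even (Module.finrank ℚ⟮(α : K)⟯ K)) {J : Ideal (𝓞 K)} (hJ : J ^ 2 = Ideal.span {α})
    {p : ℕ} (hp : p.Prime) (hD : ¬ (p : ℤ) ∣ discr K) :
    Even ((Ideal.absNorm J).factorization p) := by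
  obtain ⟨a, ha⟩ := exists_algebraMap_adjoin_eq α
  have ha0 : Ideal.span {a} ≠ ⊥ := by
    rw [Ne, Ideal.span_singleton_eq_bot]
    rintro rfl
    exact hα (by rw [← ha, map_zero])
  refine even_factorization_absNorm_of_sq_eq_map_of_even_finrank hev hp hD ha0 ?_
  rw [hJ, Ideal.map_span, Set.image_singleton, ha]

end EvenCoindex

section SquareUpToDivisor

lemma exists_dvd_sq_mul_eq_of_even_factorization {t d : ℕ} (ht : t ≠ 0)
    (h : ∀ p : ℕ, p.Prime → ¬ p ∣ d → Even (t.factorization p)) :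
    ∃ a b : ℕ, a ∣ d ∧ b ^ 2 * a = t := by
  obtain ⟨a, b, rfl, hsq⟩ := Nat.sq_mul_squarefree t
  refine ⟨a, b, ?_, rfl⟩
  rw [← Nat.prod_primeFactors_of_squarefree hsq]
  refine Finset.prod_primes_dvd _ (fun p hp => (Nat.prime_of_mem_primeFactors hp).prime)
    fun p hp => ?_
  have hpp := Nat.prime_of_mem_primeFactors hp
  by_contra hpd
  have hodd : a.factorization p = 1 :=
    le_antisymm (hsq.natFactorization_le_one p) (hpp.factorization_pos_of_dvd
      (right_ne_zero_of_mul ht) (Nat.dvd_of_mem_primeFactors hp))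
  have heven := h p hpp hpd
  rw [Nat.factorization_mul (left_ne_zero_of_mul ht) (right_ne_zero_of_mul ht),
    Nat.factorization_pow, Finsupp.add_apply, Finsupp.smul_apply, smul_eq_mul, hodd] at heven
  exact Nat.not_even_two_mul_add_one _ heven

lemma card_le_card_divisors_mul_of_even_factorization {d N : ℕ} (hd : d ≠ 0) {T : Finset ℕ}
    (hT : ∀ t ∈ T, t ≠ 0 ∧ t ≤ N)
    (heven : ∀ t ∈ T, ∀ p : ℕ, p.Prime → ¬ p ∣ d → Even (t.factorization p)) :
    T.card ≤ d.divisors.card * (N.sqrt + 1) := by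
  have hsub : T ⊆ (d.divisors ×ˢ Finset.range (N.sqrt + 1)).image fun q => q.2 ^ 2 * q.1 := by
    intro t ht
    obtain ⟨a, b, had, rfl⟩ := exists_dvd_sq_mul_eq_of_even_factorization (hT t ht).1 (heven t ht)
    have hb : b ^ 2 ≤ N := (Nat.le_mul_of_pos_right _
      (Nat.pos_of_ne_zero (right_ne_zero_of_mul (hT _ ht).1))).trans (hT _ ht).2
    exact Finset.mem_image.2 ⟨(a, b), Finset.mem_product.2 ⟨Nat.mem_divisors.2 ⟨had, hd⟩,
      Finset.mem_range_succ_iff.2 (Nat.le_sqrt'.2 hb)⟩, rfl⟩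
  calc T.card ≤ (d.divisors ×ˢ Finset.range (N.sqrt + 1)).card :=
        (Finset.card_le_card hsub).trans Finset.card_image_le
    _ = d.divisors.card * (N.sqrt + 1) := by rw [Finset.card_product, Finset.card_range]

lemma natSqrt_floor_mul_sqrt_add_one_le {c D : ℝ} (hc : 1 ≤ c) (hD : 1 ≤ D) :
    (Nat.sqrt ⌊c * √D⌋₊ : ℝ) + 1 ≤ 2 * √c * D ^ (1 / 4 : ℝ) := by
  have hquarter : √(c * √D) = √c * D ^ (1 / 4 : ℝ) := by
    rw [Real.sqrt_mul (by positivity), Real.sqrt_eq_rpow √D, Real.sqrt_eq_rpow D,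
      ← Real.rpow_mul (by positivity)]
    norm_num
  have hone : 1 ≤ √(c * √D) :=
    Real.one_le_sqrt.2 (one_le_mul_of_one_le_of_one_le hc (Real.one_le_sqrt.2 hD))
  have hfloor : (Nat.sqrt ⌊c * √D⌋₊ : ℝ) ≤ √(c * √D) :=
    Real.nat_sqrt_le_real_sqrt.trans (Real.sqrt_le_sqrt (Nat.floor_le (by positivity)))
  linarith

open Classical in
lemma card_le_of_even_factorization_absNorm {K : Type*} [Field K] [NumberField K]
    {S : Finset (Ideal (𝓞 K))} {d N : ℕ} {M : ℝ} (hd : d ≠ 0)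
    (hS : ∀ J ∈ S, J ≠ ⊥ ∧ Ideal.absNorm J ≤ N)
    (heven : ∀ J ∈ S, ∀ p : ℕ, p.Prime → ¬ p ∣ d → Even ((Ideal.absNorm J).factorization p))
    (hM : ∀ t ≤ N, (t.divisors.card : ℝ) ≤ M) :
    (S.card : ℝ) ≤ d.divisors.card * (N.sqrt + 1) * M ^ Module.finrank ℚ K := by
  have hT : ∀ t ∈ S.image (Ideal.absNorm ·), t ≠ 0 ∧ t ≤ N :=
    Finset.forall_mem_image.2 fun J hJ => ⟨Ideal.absNorm_eq_zero_iff.not.2 (hS J hJ).1, (hS J hJ).2⟩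
  have hM0 : 0 ≤ M := (Nat.cast_nonneg _).trans (hM 0 N.zero_le)
  have hfibre : ∀ t ∈ S.image (Ideal.absNorm ·),
      ((S.filter fun J => Ideal.absNorm J = t).card : ℝ) ≤ M ^ Module.finrank ℚ K := fun t ht =>
    calc ((S.filter fun J => Ideal.absNorm J = t).card : ℝ)
        ≤ (t.divisors.card : ℝ) ^ Module.finrank ℚ K := by
          exact_mod_cast card_le_card_divisors_pow_of_absNorm_eq (hT t ht).1
            fun J hJ => (Finset.mem_filter.1 hJ).2
      _ ≤ M ^ Module.finrank ℚ K := by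
          gcongr
          exact hM t (hT t ht).2
  calc (S.card : ℝ) = ∑ t ∈ S.image (Ideal.absNorm ·),
        ((S.filter fun J => Ideal.absNorm J = t).card : ℝ) := by
        exact_mod_cast Finset.card_eq_sum_card_image (Ideal.absNorm ·) S
    _ ≤ (S.image (Ideal.absNorm ·)).card * M ^ Module.finrank ℚ K := by
        rw [← nsmul_eq_mul]
        exact Finset.sum_le_card_nsmul _ _ _ hfibre
    _ ≤ d.divisors.card * (N.sqrt + 1) * M ^ Module.finrank ℚ K := by
        gcongr
        exact_mod_cast card_le_card_divisors_mul_of_even_factorization hd hT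
          (Finset.forall_mem_image.2 heven)

theorem exists_card_even_factorization_absNorm_le (n : ℕ) {c δ : ℝ} (hc : 1 ≤ c) (hδ : 0 < δ) :
    ∃ C : ℝ, 0 ≤ C ∧ ∀ (K : Type*) [Field K] [NumberField K], Module.finrank ℚ K = n →
      ∀ S : Finset (Ideal (𝓞 K)),
        (∀ J ∈ S, J ≠ ⊥ ∧ (Ideal.absNorm J : ℝ) ≤ c * √|(discr K : ℝ)|) →
        (∀ J ∈ S, ∀ p : ℕ, p.Prime → ¬ (p : ℤ) ∣ discr K →
          Even ((Ideal.absNorm J).factorization p)) →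
        (S.card : ℝ) ≤ C * |(discr K : ℝ)| ^ (1 / 4 + δ) := by
  set η := δ / (n + 1) with hη
  have hη0 : 0 < η := by positivity
  obtain ⟨A, hA, hdiv⟩ := exists_card_divisors_le hη0
  refine ⟨A * (2 * √c) * (A * c ^ η) ^ n, by positivity, fun K _ _ hK S hS heven => ?_⟩
  set D := |(discr K : ℝ)|
  have hD1 : 1 ≤ D := one_le_abs_discr K
  have hD0 : 0 < D := by linarith
  have hdD : ((discr K).natAbs : ℝ) = D := by rw [Nat.cast_natAbs, Int.cast_abs]
  have hsqrt : √D ≤ D := Real.sqrt_le_self_iff.2 (.inr hD1)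
  have hM : ∀ t ≤ ⌊c * √D⌋₊, (t.divisors.card : ℝ) ≤ A * (c ^ η * D ^ η) := fun t ht => by
    refine (hdiv t).trans ?_
    rw [← Real.mul_rpow (by positivity) hD0.le]
    have htD : (t : ℝ) ≤ c * D := ((Nat.le_floor_iff (by positivity)).1 ht).trans (by gcongr)
    gcongr
  have hpow : (D ^ η) ^ (n + 1) = D ^ δ := by
    rw [← Real.rpow_natCast, ← Real.rpow_mul hD0.le, Nat.cast_add_one, hη,
      div_mul_cancel₀ _ (by positivity)]
  have hcard := card_le_of_even_factorization_absNorm (Int.natAbs_ne_zero.2 (discr_ne_zero K))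
    (fun J hJ => ⟨(hS J hJ).1, Nat.le_floor (hS J hJ).2⟩)
    (fun J hJ p hp hpD => heven J hJ p hp (mt Int.natCast_dvd.1 hpD)) hM
  rw [hK] at hcard
  calc (S.card : ℝ) ≤ _ := hcard
    _ ≤ A * D ^ η * (2 * √c * D ^ (1 / 4 : ℝ)) * (A * (c ^ η * D ^ η)) ^ n := by
        gcongr
        · exact hdD ▸ hdiv _
        · exact natSqrt_floor_mul_sqrt_add_one_le hc hD1
    _ = A * (2 * √c) * (A * c ^ η) ^ n * (D ^ (1 / 4 : ℝ) * (D ^ η) ^ (n + 1)) := by ring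
    _ = A * (2 * √c) * (A * c ^ η) ^ n * D ^ (1 / 4 + δ) := by rw [hpow, ← Real.rpow_add hD0]

end SquareUpToDivisor

/-! ### Ideals whose square has a small generator -/

section SmallSquareGenerator

open scoped IntermediateField

lemma natAbs_norm_eq_absNorm_sq {K : Type*} [Field K] [NumberField K] {J : Ideal (𝓞 K)} {α : 𝓞 K}
    (hJ : J ^ 2 = Ideal.span {α}) : (Algebra.norm ℤ α).natAbs = Ideal.absNorm J ^ 2 := by
  rw [← map_pow, hJ, Ideal.absNorm_span_singleton]

lemma absNorm_le_sqrt_mul_sqrt_abs_discr {K : Type*} [Field K] [NumberField K] {J : Ideal (𝓞 K)}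
    {α : 𝓞 K} (hJ : J ^ 2 = Ideal.span {α}) {c : ℝ} (hc : 0 ≤ c)
    (hα : ∀ w : InfinitePlace K, w (α : K) ≤ c * rootDiscr K) :
    (Ideal.absNorm J : ℝ) ≤ √(c ^ Module.finrank ℚ K) * √|(discr K : ℝ)| := by
  rw [← Real.sqrt_mul (by positivity)]
  refine Real.le_sqrt_of_sq_le ?_
  calc (Ideal.absNorm J : ℝ) ^ 2 = |((Algebra.norm ℤ α : ℤ) : ℝ)| := by
        rw [← Int.cast_abs, ← Nat.cast_natAbs, natAbs_norm_eq_absNorm_sq hJ, Nat.cast_pow]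
    _ ≤ (c * rootDiscr K) ^ Module.finrank ℚ K := abs_norm_int_le_pow_finrank hα
    _ = c ^ Module.finrank ℚ K * |(discr K : ℝ)| := by rw [mul_pow, rootDiscr_pow_finrank]

open Classical in
theorem exists_card_sq_eq_span_odd_le (n : ℕ) {c δ : ℝ} (hc : 1 ≤ c) (hδ : 0 < δ) :
    ∃ C : ℝ, 0 ≤ C ∧ ∀ (K : Type*) [Field K] [NumberField K], Module.finrank ℚ K = n →
      ∀ S : Finset (Ideal (𝓞 K)),
        (∀ J ∈ S, ∃ α : 𝓞 K, J ^ 2 = Ideal.span {α} ∧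
          (∀ w : InfinitePlace K, w (α : K) ≤ c * rootDiscr K) ∧
          Odd (Module.finrank ℚ⟮(α : K)⟯ K)) →
        (S.card : ℝ) ≤ C * |(discr K : ℝ)| ^ ((1 : ℝ) / 2 - 1 / (2 * (n : ℝ)) + δ) := by
  obtain ⟨C, hC, hcount⟩ := exists_card_isSquare_norm_le n hc hδ
  refine ⟨C, hC, fun K _ _ hK S hS => ?_⟩
  choose! α hJ hbound hodd using hS
  have hinj : Set.InjOn α S := fun I hI J hJS h =>
    pow_left_injective two_ne_zero (by simp only [hJ I hI, hJ J hJS, h])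
  rw [← Finset.card_image_of_injOn hinj]
  refine hcount K hK _ (Finset.forall_mem_image.2 hbound) (Finset.forall_mem_image.2 hodd)
    (Finset.forall_mem_image.2 fun J hJS => ?_)
  rw [natAbs_norm_eq_absNorm_sq (hJ J hJS)]
  exact IsSquare.sq _

theorem exists_card_sq_eq_span_even_le (n : ℕ) {c δ : ℝ} (hc : 1 ≤ c) (hδ : 0 < δ) :
    ∃ C : ℝ, 0 ≤ C ∧ ∀ (K : Type*) [Field K] [NumberField K], Module.finrank ℚ K = n →
      ∀ S : Finset (Ideal (𝓞 K)),
        (∀ J ∈ S, ∃ α : 𝓞 K, α ≠ 0 ∧ J ^ 2 = Ideal.span {α} ∧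
          (∀ w : InfinitePlace K, w (α : K) ≤ c * rootDiscr K) ∧
          Even (Module.finrank ℚ⟮(α : K)⟯ K)) →
        (S.card : ℝ) ≤ C * |(discr K : ℝ)| ^ (1 / 4 + δ) := by
  obtain ⟨C, hC, hcount⟩ :=
    exists_card_even_factorization_absNorm_le n (Real.one_le_sqrt.2 (one_le_pow₀ hc)) hδ
  refine ⟨C, hC, fun K _ _ hK S hS => hcount K hK S (fun J hJS => ?_) fun J hJS p hp hpD => ?_⟩
  · obtain ⟨α, hα, hJ, hbound, -⟩ := hS J hJS
    refine ⟨?_, hK ▸ absNorm_le_sqrt_mul_sqrt_abs_discr hJ (by linarith) hbound⟩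
    rintro rfl
    exact hα (Ideal.span_singleton_eq_bot.1 (hJ ▸ Ideal.bot_pow two_ne_zero))
  · obtain ⟨α, hα, hJ, -, heven⟩ := hS J hJS
    exact even_factorization_absNorm_of_sq_eq_span_singleton hα heven hJ hp hpD

open Classical in
theorem exists_card_sq_eq_span_le {n : ℕ} (hn : 2 ≤ n) {c δ : ℝ} (hc : 1 ≤ c) (hδ : 0 < δ) :
    ∃ C : ℝ, 0 ≤ C ∧ ∀ (K : Type*) [Field K] [NumberField K], Module.finrank ℚ K = n →
      ∀ S : Finset (Ideal (𝓞 K)),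
        (∀ J ∈ S, ∃ α : 𝓞 K, α ≠ 0 ∧ J ^ 2 = Ideal.span {α} ∧
          ∀ w : InfinitePlace K, w (α : K) ≤ c * rootDiscr K) →
        (S.card : ℝ) ≤ C * |(discr K : ℝ)| ^ ((1 : ℝ) / 2 - 1 / (2 * (n : ℝ)) + δ) := by
  obtain ⟨C₁, hC₁, hodd⟩ := exists_card_sq_eq_span_odd_le n hc hδ
  obtain ⟨C₂, hC₂, heven⟩ := exists_card_sq_eq_span_even_le n hc hδ
  refine ⟨C₁ + C₂, by positivity, fun K _ _ hK S hS => ?_⟩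
  choose! α hα hJ hbound using hS
  have hexp : 1 / 4 + δ ≤ (1 : ℝ) / 2 - 1 / (2 * (n : ℝ)) + δ := by
    have hn' : (2 : ℝ) ≤ n := by exact_mod_cast hn
    have : 1 / (2 * (n : ℝ)) ≤ 1 / (2 * 2) := by gcongr
    linarith
  have hSodd := hodd K hK (S.filter fun J => Odd (Module.finrank ℚ⟮(α J : K)⟯ K)) fun J h =>
    have ⟨hJS, hJodd⟩ := Finset.mem_filter.1 h
    ⟨α J, hJ J hJS, hbound J hJS, hJodd⟩
  have hSeven := heven K hK (S.filter fun J => ¬ Odd (Module.finrank ℚ⟮(α J : K)⟯ K)) fun J h =>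
    have ⟨hJS, hJeven⟩ := Finset.mem_filter.1 h
    ⟨α J, hα J hJS, hJ J hJS, hbound J hJS, Nat.not_odd_iff_even.1 hJeven⟩
  have hpow := Real.rpow_le_rpow_of_exponent_le (one_le_abs_discr K) hexp
  rw [← Finset.card_filter_add_card_filter_not fun J => Odd (Module.finrank ℚ⟮(α J : K)⟯ K),
    Nat.cast_add, add_mul]
  exact add_le_add hSodd (hSeven.trans (by gcongr))

end SmallSquareGenerator

open Classical in
theorem two_torsion_degree_n_fields_general {n : ℕ} (hn : 2 ≤ n) {ε : ℝ} (hε : 0 < ε) :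
    ∃ C : ℝ, 0 < C ∧ ∀ (K : Type*) [Field K] [NumberField K],
      Module.finrank ℚ K = n →
      (clTor K 2 : ℝ) ≤ C * ((NumberField.discr K).natAbs : ℝ) ^
        ((1 : ℝ) / 2 - 1 / (2 * (n : ℝ)) + ε) := by
  obtain ⟨C, hC, hcount⟩ := exists_card_sq_eq_span_le hn (c := 9) (by norm_num) hε
  refine ⟨C + 1, by positivity, fun K _ _ hK => ?_⟩
  choose J α hJc hα hJ hbound using fun c : {c : ClassGroup (𝓞 K) // c ^ 2 = 1} =>
    exists_mk0_eq_and_sq_eq_span_singleton c.2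
  have hinj : Function.Injective fun c => (J c : Ideal (𝓞 K)) := fun c c' h =>
    Subtype.ext (by rw [← hJc c, ← hJc c', Subtype.ext h])
  have := Fintype.ofFinite {c : ClassGroup (𝓞 K) // c ^ 2 = 1}
  rw [clTor, Nat.card_eq_fintype_card, ← Finset.card_univ, ← Finset.card_image_of_injective _ hinj,
    Nat.cast_natAbs, Int.cast_abs]
  refine (hcount K hK _ (Finset.forall_mem_image.2 fun c _ =>
    ⟨α c, hα c, hJ c, hbound c⟩)).trans ?_
  gcongr
  exact (lt_add_one C).le

/-- **Bhargava–Shankar–Taniguchi–Thorne–Tsimerman–Zhao.** For each degree `n ≥ 3` and each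
`ε > 0` there is a constant `C = C(n,ε)` such that every number field `K` of degree `n`
satisfies `|Cl_K[2]| ≤ C · D_K^{1/2 - 1/(2n) + ε}`. -/
theorem two_torsion_degree_n_fields (n : ℕ) (hn : 3 ≤ n) (ε : ℝ) (hε : 0 < ε) :
    ∃ C : ℝ, 0 < C ∧ ∀ (K : Type*) [Field K] [NumberField K],
      Module.finrank ℚ K = n →
      (clTor K 2 : ℝ) ≤ C * ((NumberField.discr K).natAbs : ℝ) ^
        ((1 : ℝ) / 2 - 1 / (2 * (n : ℝ)) + ε) := by
  exact two_torsion_degree_n_fields_general (by lia) hε
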